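/- arXiv:2309.01463 — 2 statements merged into one kernel-verified Lean document; each statement's English description precedes it below -/
import Mathlib

section
/- Let T₀ and T₁ be two isomorphic trees, let r₀ be a vertex of T₀ and r₁ its image under an isomorphism T₀ → T₁, and let ε > 0 be an arbitrarily small real number. Then there exists a pair of drawings ⟨Γ₀,Γ₁⟩ that is an MW-β parallelogram drawing of ⟨(T₀,r₀),(T₁,r₁)⟩ for every β ∈ [1,∞] and whose strip ratio σ satisfies σ < ε. -/
/-!
For adjacent vertices it suffices that no witness lies in the closed strip, which contains every
closed β-region; for non-adjacent vertices it suffices that a witness lies in the open disk having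
the two points as a diameter (`⟪w - p, w - q⟫ < 0`), which is contained in every open β-region
(`Rclosed_subset_stripClosed`, `mem_Ropen_of_inner_neg`). This removes β from the problem.

The two drawings are built together, as maps `A`, `B` on the vertices of a single tree (the
isomorphism is only used at the end), by induction over rooted forests. The invariant is that of a
row drawing (`Row`): besides the witness conditions, all roots of `A` lie above height `1`, all of
`A` lies above `-1`, every non-root of `A` lies below some point of `B`, the leftmost point of
the picture is a root of `A`, edges are neither horizontal nor vertical, and the same holds for the
picture `(-B, -A)` reflected in the origin. In particular every root of `A` lies above all of `B`.

* Two rows are combined (`row_juxtapose`) by sliding them far apart horizontally. No edge is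
  vertical, so the far part leaves the strips of the edges of the near part; the rightmost point of
  the left copy of `B` is a witness for any two points of `A` in different parts.
* A forest becomes a tree (`row_addRoot`) by placing the new roots far above and far below the
  centre `m` of `b₀b₁`, where `b₀` is the leftmost point of `A` and `b₁` the rightmost point
  of `B`: at `m + T(0, 1)` for `A` and at `m - T(0, 1)` for `B`. An old vertex of `A` is
  separated from the new root by a witness, in the disk sense and for large `T`, precisely when some
  point of `B` is above it, hence precisely when it is not a child of the new root; the strips of old
  edges do not reach the new roots because no edge is horizontal. The new roots and `b₀`, `b₁` span
  a parallelogram that eventually contains everything. A rotation by almost a quarter turn brings the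
  new root of `A` to the far left and slightly upward and orders heights like the old horizontal
  coordinate, so, after shrinking, the result is again a row drawing, with a single root.

The height of the strip between `b₀` and `b₁` does not depend on `T` while the height difference
of the roots is proportional to `T`, so letting `T → ∞` in the last step makes the strip ratio
arbitrarily small.
-/

open scoped RealInnerProductSpace ENNReal

noncomputable section

/-- The Euclidean plane. -/
abbrev Plane : Type := EuclideanSpace ℝ (Fin 2)

/-- The open β-region of two points, for finite β ≥ 1. -/
def betaOpen (p q : Plane) (β : ℝ) : Set Plane :=
  Metric.ball ((1 - β / 2) • p + (β / 2) • q) (β * dist p q / 2) ∩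
    Metric.ball ((β / 2) • p + (1 - β / 2) • q) (β * dist p q / 2)

/-- The closed β-region of two points, for finite β ≥ 1. -/
def betaClosed (p q : Plane) (β : ℝ) : Set Plane :=
  Metric.closedBall ((1 - β / 2) • p + (β / 2) • q) (β * dist p q / 2) ∩
    Metric.closedBall ((β / 2) • p + (1 - β / 2) • q) (β * dist p q / 2)

/-- The open ∞-region: the open strip of points whose orthogonal projection on the
line through `p` and `q` lies strictly between `p` and `q`. -/
def stripOpen (p q : Plane) : Set Plane :=
  {w | 0 < ⟪w - p, q - p⟫ ∧ 0 < ⟪w - q, p - q⟫}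

/-- The closed ∞-region. -/
def stripClosed (p q : Plane) : Set Plane :=
  {w | 0 ≤ ⟪w - p, q - p⟫ ∧ 0 ≤ ⟪w - q, p - q⟫}

/-- The open β-region, for β ∈ [1,∞] encoded as `ℝ≥0∞`. -/
def Ropen (p q : Plane) (β : ℝ≥0∞) : Set Plane :=
  if β = ⊤ then stripOpen p q else betaOpen p q β.toReal

/-- The closed β-region, for β ∈ [1,∞] encoded as `ℝ≥0∞`. -/
def Rclosed (p q : Plane) (β : ℝ≥0∞) : Set Plane :=
  if β = ⊤ then stripClosed p q else betaClosed p q β.toReal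

/-- A drawing of a pair of graphs: a pair of injective maps with disjoint images. -/
def IsDrawingPair {V₀ V₁ : Type*} (Γ₀ : V₀ → Plane) (Γ₁ : V₁ → Plane) : Prop :=
  Function.Injective Γ₀ ∧ Function.Injective Γ₁ ∧
    Disjoint (Set.range Γ₀) (Set.range Γ₁)

/-- Mutual witness β-drawing (open/closed version): adjacent pairs have no witness in the
closed β-region, non-adjacent pairs have a witness in the open β-region. -/
def IsMWDrawing {V₀ V₁ : Type*} (G₀ : SimpleGraph V₀) (G₁ : SimpleGraph V₁)
    (Γ₀ : V₀ → Plane) (Γ₁ : V₁ → Plane) (β : ℝ≥0∞) : Prop :=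
  IsDrawingPair Γ₀ Γ₁ ∧
  (∀ u v : V₀, u ≠ v →
    (G₀.Adj u v → ∀ w : V₁, Γ₁ w ∉ Rclosed (Γ₀ u) (Γ₀ v) β) ∧
    (¬ G₀.Adj u v → ∃ w : V₁, Γ₁ w ∈ Ropen (Γ₀ u) (Γ₀ v) β)) ∧
  (∀ u v : V₁, u ≠ v →
    (G₁.Adj u v → ∀ w : V₀, Γ₀ w ∉ Rclosed (Γ₁ u) (Γ₁ v) β) ∧
    (¬ G₁.Adj u v → ∃ w : V₀, Γ₀ w ∈ Ropen (Γ₁ u) (Γ₁ v) β))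

/-- Mutual witness MW-[β] drawing (closed version): adjacency iff no witness in the
closed β-region. -/
def IsMWClosedDrawing {V₀ V₁ : Type*} (G₀ : SimpleGraph V₀) (G₁ : SimpleGraph V₁)
    (Γ₀ : V₀ → Plane) (Γ₁ : V₁ → Plane) (β : ℝ≥0∞) : Prop :=
  IsDrawingPair Γ₀ Γ₁ ∧
  (∀ u v : V₀, u ≠ v →
    (G₀.Adj u v ↔ ∀ w : V₁, Γ₁ w ∉ Rclosed (Γ₀ u) (Γ₀ v) β)) ∧
  (∀ u v : V₁, u ≠ v →
    (G₁.Adj u v ↔ ∀ w : V₀, Γ₀ w ∉ Rclosed (Γ₁ u) (Γ₁ v) β))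

/-- Linear separability of a pair of drawings. -/
def LinearlySeparable {V₀ V₁ : Type*} (Γ₀ : V₀ → Plane) (Γ₁ : V₁ → Plane) : Prop :=
  ∃ (a : Plane) (c : ℝ), a ≠ 0 ∧ (∀ v, ⟪a, Γ₀ v⟫ < c) ∧ (∀ v, c < ⟪a, Γ₁ v⟫)

/-- A nicely oriented parallelogram `⟨a₀, b₀, a₁, b₁⟩`: it is a parallelogram whose
longer diagonal is `a₀a₁`, with no interior angle equal to `π/2`, and with the given
coordinate ordering. -/
def NicelyOriented (a₀ b₀ a₁ b₁ : Plane) : Prop :=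
  a₀ + a₁ = b₀ + b₁ ∧
  dist b₀ b₁ < dist a₀ a₁ ∧
  ⟪b₀ - a₀, b₁ - a₀⟫ ≠ 0 ∧
  a₁ 1 < b₀ 1 ∧ b₀ 1 < b₁ 1 ∧ b₁ 1 < a₀ 1 ∧
  a₀ 0 < b₀ 0 ∧ b₀ 0 < b₁ 0 ∧ b₁ 0 < a₁ 0

/-- An MW-β parallelogram drawing of a pair of rooted trees `⟨(G₀,r₀), (G₁,r₁)⟩`,
supported by the nicely oriented parallelogram `⟨a₀, b₀, a₁, b₁⟩`. -/
def IsMWParallelogramDrawing {V₀ V₁ : Type*} [Fintype V₀] [Fintype V₁]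
    (G₀ : SimpleGraph V₀) (G₁ : SimpleGraph V₁) (r₀ : V₀) (r₁ : V₁)
    (Γ₀ : V₀ → Plane) (Γ₁ : V₁ → Plane) (a₀ b₀ a₁ b₁ : Plane) (β : ℝ≥0∞) : Prop :=
  IsMWDrawing G₀ G₁ Γ₀ Γ₁ β ∧
  NicelyOriented a₀ b₀ a₁ b₁ ∧
  Set.range Γ₀ ∪ Set.range Γ₁ ⊆ convexHull ℝ {a₀, b₀, a₁, b₁} ∧
  Γ₀ r₀ = a₀ ∧ Γ₁ r₁ = a₁ ∧
  (1 < Fintype.card V₀ →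
    ∃ v₀ : V₀, G₀.Adj r₀ v₀ ∧ Γ₀ v₀ = b₀ ∧
      ∀ u : V₀, u ≠ r₀ → u ≠ v₀ → b₀ 1 < Γ₀ u 1 ∧ Γ₀ u 1 < b₁ 1) ∧
  (1 < Fintype.card V₁ →
    ∃ v₁ : V₁, G₁.Adj r₁ v₁ ∧ Γ₁ v₁ = b₁ ∧
      ∀ u : V₁, u ≠ r₁ → u ≠ v₁ → b₀ 1 < Γ₁ u 1 ∧ Γ₁ u 1 < b₁ 1) ∧
  (∀ u v : V₀, G₀.Adj u v → Γ₀ u 0 ≠ Γ₀ v 0) ∧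
  (∀ u v : V₁, G₁.Adj u v → Γ₁ u 0 ≠ Γ₁ v 0)

/-! ### Row drawings -/

open Filter Topology

/-- Coordinate form of the Euclidean inner product; `ℝ × ℝ` is used here only as a coordinate
plane, its sup norm plays no role. -/
def ip (a b : ℝ × ℝ) : ℝ := a.1 * b.1 + a.2 * b.2

/-- The conditions that a row drawing `(A, B)` of the subforest of `G` on `S` imposes on `A`, where
`R` contains the roots. `adj` says that no point of `B` is in the closed strip of an edge, `nonadj`
that some point of `B` is in the open disk with diameter `A u A v`, and `left` that the leftmost
point of the whole picture is a root of `A`. Only the values of `A`, `B` on `S` and the part of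
`R` inside `S` matter. -/
structure Half {V : Type*} (G : SimpleGraph V) (S : Finset V) (R : Set V)
    (A B : V → ℝ × ℝ) : Prop where
  adj : ∀ u ∈ S, ∀ v ∈ S, G.Adj u v → ∀ w ∈ S,
    ip (B w - A u) (A v - A u) < 0 ∨ ip (B w - A v) (A u - A v) < 0
  nonadj : ∀ u ∈ S, ∀ v ∈ S, u ≠ v → ¬ G.Adj u v → ∃ w ∈ S, ip (B w - A u) (B w - A v) < 0
  left : S.Nonempty → ∃ f ∈ S, f ∈ R ∧ (∀ u ∈ S, u ≠ f → (A f).1 < (A u).1) ∧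
    ∀ w ∈ S, (A f).1 < (B w).1
  edge_x : ∀ u ∈ S, ∀ v ∈ S, G.Adj u v → (A u).1 ≠ (A v).1
  edge_y : ∀ u ∈ S, ∀ v ∈ S, G.Adj u v → (A u).2 ≠ (A v).2
  top : ∀ u ∈ S, u ∈ R → 1 < (A u).2
  low : ∀ u ∈ S, -1 < (A u).2
  wit : ∀ u ∈ S, u ∉ R → ∃ w ∈ S, (A u).2 < (B w).2
  disj : ∀ u ∈ S, ∀ w ∈ S, A u ≠ B w

/-- A row drawing: the conditions of `Half` hold for `(A, B)` and for its image under the reflection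
in the origin with the two roles exchanged. -/
def Row {V : Type*} (G : SimpleGraph V) (S : Finset V) (R : Set V) (A B : V → ℝ × ℝ) : Prop :=
  Half G S R A B ∧ Half G S R (-B) (-A)

lemma Half.congr {V : Type*} {G : SimpleGraph V} {S : Finset V} {R : Set V}
    {A B A' B' : V → ℝ × ℝ} (h : Half G S R A B) (hA : ∀ u ∈ S, A' u = A u)
    (hB : ∀ u ∈ S, B' u = B u) : Half G S R A' B' where
  adj u hu v hv e w hw := by rw [hA u hu, hA v hv, hB w hw]; exact h.adj u hu v hv e w hw
  nonadj u hu v hv n e := by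
    obtain ⟨w, hw, h1⟩ := h.nonadj u hu v hv n e
    exact ⟨w, hw, by rwa [hA u hu, hA v hv, hB w hw]⟩
  left hS := by
    obtain ⟨f, hf, hR, h1, h2⟩ := h.left hS
    refine ⟨f, hf, hR, fun u hu n => ?_, fun w hw => ?_⟩
    · rw [hA f hf, hA u hu]; exact h1 u hu n
    · rw [hA f hf, hB w hw]; exact h2 w hw
  edge_x u hu v hv e := by rw [hA u hu, hA v hv]; exact h.edge_x u hu v hv e
  edge_y u hu v hv e := by rw [hA u hu, hA v hv]; exact h.edge_y u hu v hv e
  top u hu hR := by rw [hA u hu]; exact h.top u hu hR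
  low u hu := by rw [hA u hu]; exact h.low u hu
  wit u hu hR := by
    obtain ⟨w, hw, h1⟩ := h.wit u hu hR
    exact ⟨w, hw, by rwa [hA u hu, hB w hw]⟩
  disj u hu w hw := by rw [hA u hu, hB w hw]; exact h.disj u hu w hw

lemma Half.congr_roots {V : Type*} {G : SimpleGraph V} {S : Finset V} {R R' : Set V}
    {A B : V → ℝ × ℝ} (h : Half G S R A B) (hR : ∀ u ∈ S, u ∈ R ↔ u ∈ R') : Half G S R' A B where
  adj := h.adj
  nonadj := h.nonadj
  left hS := by
    obtain ⟨f, hf, hfR, h1⟩ := h.left hS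
    exact ⟨f, hf, (hR f hf).1 hfR, h1⟩
  edge_x := h.edge_x
  edge_y := h.edge_y
  top u hu hu' := h.top u hu ((hR u hu).2 hu')
  low := h.low
  wit u hu hu' := h.wit u hu fun h => hu' ((hR u hu).1 h)
  disj := h.disj

/-! ### Juxtaposition of two rows -/

lemma eventually_affine_neg (a : ℝ) {c : ℝ} (hc : c < 0) : ∀ᶠ T : ℝ in atTop, a + T * c < 0 := by
  filter_upwards [eventually_gt_atTop (a / (-c))] with T hT
  rw [div_lt_iff₀ (by linarith)] at hT
  linarith

lemma eventually_quad_neg (a b : ℝ) {c : ℝ} (hc : c < 0) :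
    ∀ᶠ T : ℝ in atTop, a + T * b + T * T * c < 0 := by
  filter_upwards [eventually_affine_neg b hc, eventually_affine_neg (a + b) hc,
    eventually_ge_atTop 1, eventually_affine_neg (|a| + b) hc] with T h1 h2 h3 h4
  have := le_abs_self a
  have := abs_nonneg a
  nlinarith

lemma eventually_small_pos (a : ℝ) {c : ℝ} (hc : 0 < c) :
    ∀ᶠ η : ℝ in 𝓝[>] 0, 0 < c + η * a := by
  have h : ContinuousAt (fun η : ℝ => c + η * a) 0 := by fun_prop
  have h2 : ∀ᶠ η : ℝ in 𝓝 0, 0 < c + η * a :=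
    h.eventually (lt_mem_nhds (by simpa using hc))
  exact h2.filter_mono nhdsWithin_le_nhds

/-- Along an edge that is not perpendicular to `e`, the two defining inner products of its
closed strip have opposite and unbounded growth when the test point moves to infinity along `e`. -/
lemma eventually_leaves_strip (p a b e : ℝ × ℝ) (h : ip e (b - a) ≠ 0) :
    ∀ᶠ T : ℝ in atTop, ip (p + T • e - a) (b - a) < 0 ∨ ip (p + T • e - b) (a - b) < 0 := by
  rcases lt_or_gt_of_ne h with h | h
  · filter_upwards [eventually_affine_neg (ip (p - a) (b - a)) h] with T hT
    left
    simp [ip] at hT ⊢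
    linarith
  · have h' : ip e (a - b) < 0 := by simp [ip] at h ⊢; linarith
    filter_upwards [eventually_affine_neg (ip (p - b) (a - b)) h'] with T hT
    right
    simp [ip] at hT ⊢
    linarith

/-- Two parts are moved apart horizontally, `s = -1` on the left part and `s = 1` on the right part.
The rightmost point `B l` of the left part is the witness for all pairs in different parts. -/
lemma half_juxtapose {V : Type*} [DecidableEq V] {G : SimpleGraph V} {S₁ S₂ : Finset V}
    {R₁ R₂ R : Set V} {A B : V → ℝ × ℝ} {s : V → ℝ}
    (h₁ : Half G S₁ R₁ A B) (h₂ : Half G S₂ R₂ A B) (hne : S₁.Nonempty)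
    (hl : ∃ l ∈ S₁, ∀ u ∈ S₁, (A u).1 < (B l).1)
    (hs₁ : ∀ u ∈ S₁, s u = -1) (hs₂ : ∀ u ∈ S₂, s u = 1)
    (hno : ∀ u ∈ S₁, ∀ v ∈ S₂, ¬ G.Adj u v)
    (hR₁ : ∀ u ∈ S₁, u ∈ R ↔ u ∈ R₁) (hR₂ : ∀ u ∈ S₂, u ∈ R ↔ u ∈ R₂) :
    ∀ᶠ L : ℝ in atTop, Half G (S₁ ∪ S₂) R
      (fun u => A u + (s u * L, 0)) (fun u => B u + (s u * L, 0)) := by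
  obtain ⟨l, hlS, hl⟩ := hl
  obtain ⟨f, hfS, hfR, hf1, hf2⟩ := h₁.left hne
  -- `E1`, `E2`: each part is outside the strips of the edges of the other one.
  have E1 : ∀ᶠ L : ℝ in atTop, ∀ u ∈ S₁, ∀ v ∈ S₁, G.Adj u v → ∀ w ∈ S₂,
      ip (B w + L • ((2 : ℝ), (0 : ℝ)) - A u) (A v - A u) < 0 ∨
      ip (B w + L • ((2 : ℝ), (0 : ℝ)) - A v) (A u - A v) < 0 := by
    simp only [eventually_all_finset, eventually_imp_distrib_left]
    intro u hu v hv e w hw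
    refine eventually_leaves_strip _ _ _ _ ?_
    have := h₁.edge_x u hu v hv e
    simp only [ip, Prod.fst_sub, zero_mul, add_zero]
    intro h
    exact this (by linarith)
  have E2 : ∀ᶠ L : ℝ in atTop, ∀ u ∈ S₂, ∀ v ∈ S₂, G.Adj u v → ∀ w ∈ S₁,
      ip (B w + L • ((-2 : ℝ), (0 : ℝ)) - A u) (A v - A u) < 0 ∨
      ip (B w + L • ((-2 : ℝ), (0 : ℝ)) - A v) (A u - A v) < 0 := by
    simp only [eventually_all_finset, eventually_imp_distrib_left]
    intro u hu v hv e w hw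
    refine eventually_leaves_strip _ _ _ _ ?_
    have := h₂.edge_x u hu v hv e
    simp only [ip, Prod.fst_sub, zero_mul, add_zero]
    intro h
    exact this (by linarith)
  have E3 : ∀ᶠ L : ℝ in atTop, ∀ u ∈ S₁, ∀ v ∈ S₂,
      ip (B l - A u) (B l - A v) + L * (-2 * ((B l).1 - (A u).1)) < 0 := by
    simp only [eventually_all_finset]
    intro u hu v hv
    exact eventually_affine_neg _ (by linarith [hl u hu])
  have E4 : ∀ᶠ L : ℝ in atTop, ∀ v ∈ S₂, (A f).1 - (A v).1 + L * (-2) < 0 ∧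
      (A f).1 - (B v).1 + L * (-2) < 0 := by
    simp only [eventually_all_finset, eventually_and]
    intro v hv
    exact ⟨eventually_affine_neg _ (by norm_num), eventually_affine_neg _ (by norm_num)⟩
  have E5 : ∀ᶠ L : ℝ in atTop, ∀ u ∈ S₁, ∀ v ∈ S₂, (A u).1 - (B v).1 + L * (-2) < 0 ∧
      (B u).1 - (A v).1 + L * (-2) < 0 := by
    simp only [eventually_all_finset, eventually_and]
    intro u hu v hv
    exact ⟨eventually_affine_neg _ (by norm_num), eventually_affine_neg _ (by norm_num)⟩
  filter_upwards [E1, E2, E3, E4, E5] with L e1 e2 e3 e4 e5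
  have key3 : ∀ u ∈ S₁, ∀ v ∈ S₂, ip (B l + (-1 * L, 0) - (A u + (-1 * L, 0)))
      (B l + (-1 * L, 0) - (A v + (1 * L, 0))) < 0 := by
    intro u hu v hv
    have := e3 u hu v hv
    simp [ip] at this ⊢
    linarith
  constructor
  · intro u hu v hv e w hw
    rw [Finset.mem_union] at hu hv hw
    rcases hu with hu | hu <;> rcases hv with hv | hv
    · rcases hw with hw | hw
      · simp only [hs₁ u hu, hs₁ v hv, hs₁ w hw, add_sub_add_right_eq_sub]
        exact h₁.adj u hu v hv e w hw
      · have := e1 u hu v hv e w hw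
        simp only [hs₁ u hu, hs₁ v hv, hs₂ w hw, add_sub_add_right_eq_sub]
        convert this using 3
        all_goals first | rfl | (ext <;> simp; ring)
    · exact absurd e (hno u hu v hv)
    · exact absurd e.symm (hno v hv u hu)
    · rcases hw with hw | hw
      · have := e2 u hu v hv e w hw
        simp only [hs₂ u hu, hs₂ v hv, hs₁ w hw, add_sub_add_right_eq_sub]
        convert this using 3
        all_goals first | rfl | (ext <;> simp; ring)
      · simp only [hs₂ u hu, hs₂ v hv, hs₂ w hw, add_sub_add_right_eq_sub]
        exact h₂.adj u hu v hv e w hw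
  · intro u hu v hv n e
    rw [Finset.mem_union] at hu hv
    rcases hu with hu | hu <;> rcases hv with hv | hv
    · obtain ⟨w, hw, h⟩ := h₁.nonadj u hu v hv n e
      refine ⟨w, Finset.mem_union_left _ hw, ?_⟩
      simpa only [hs₁ u hu, hs₁ v hv, hs₁ w hw, add_sub_add_right_eq_sub]
    · refine ⟨l, Finset.mem_union_left _ hlS, ?_⟩
      simp only [hs₁ u hu, hs₂ v hv, hs₁ l hlS]
      exact key3 u hu v hv
    · refine ⟨l, Finset.mem_union_left _ hlS, ?_⟩
      simp only [hs₂ u hu, hs₁ v hv, hs₁ l hlS]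
      have := key3 v hv u hu
      simp only [ip] at this ⊢
      linarith
    · obtain ⟨w, hw, h⟩ := h₂.nonadj u hu v hv n e
      refine ⟨w, Finset.mem_union_right _ hw, ?_⟩
      simpa only [hs₂ u hu, hs₂ v hv, hs₂ w hw, add_sub_add_right_eq_sub]
  · intro _
    refine ⟨f, Finset.mem_union_left _ hfS, (hR₁ f hfS).2 hfR, fun u hu n => ?_, fun w hw => ?_⟩
    · rw [Finset.mem_union] at hu
      rcases hu with hu | hu
      · simpa [hs₁ u hu, hs₁ f hfS] using hf1 u hu n
      · have := (e4 u hu).1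
        simp [hs₂ u hu, hs₁ f hfS]; linarith
    · rw [Finset.mem_union] at hw
      rcases hw with hw | hw
      · simpa [hs₁ w hw, hs₁ f hfS] using hf2 w hw
      · have := (e4 w hw).2
        simp [hs₂ w hw, hs₁ f hfS]; linarith
  · intro u hu v hv e
    rw [Finset.mem_union] at hu hv
    rcases hu with hu | hu <;> rcases hv with hv | hv
    · simpa [hs₁ u hu, hs₁ v hv] using h₁.edge_x u hu v hv e
    · exact absurd e (hno u hu v hv)
    · exact absurd e.symm (hno v hv u hu)
    · simpa [hs₂ u hu, hs₂ v hv] using h₂.edge_x u hu v hv e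
  · intro u hu v hv e
    rw [Finset.mem_union] at hu hv
    rcases hu with hu | hu <;> rcases hv with hv | hv
    · simpa using h₁.edge_y u hu v hv e
    · exact absurd e (hno u hu v hv)
    · exact absurd e.symm (hno v hv u hu)
    · simpa using h₂.edge_y u hu v hv e
  · intro u hu hR
    rw [Finset.mem_union] at hu
    rcases hu with hu | hu
    · simpa using h₁.top u hu ((hR₁ u hu).1 hR)
    · simpa using h₂.top u hu ((hR₂ u hu).1 hR)
  · intro u hu
    rw [Finset.mem_union] at hu
    rcases hu with hu | hu
    · simpa using h₁.low u hu
    · simpa using h₂.low u hu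
  · intro u hu hR
    rw [Finset.mem_union] at hu
    rcases hu with hu | hu
    · obtain ⟨w, hw, h⟩ := h₁.wit u hu (fun h => hR ((hR₁ u hu).2 h))
      exact ⟨w, Finset.mem_union_left _ hw, by simpa using h⟩
    · obtain ⟨w, hw, h⟩ := h₂.wit u hu (fun h => hR ((hR₂ u hu).2 h))
      exact ⟨w, Finset.mem_union_right _ hw, by simpa using h⟩
  · intro u hu w hw
    rw [Finset.mem_union] at hu hw
    rcases hu with hu | hu <;> rcases hw with hw | hw
    · simpa [hs₁ u hu, hs₁ w hw] using h₁.disj u hu w hw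
    · have := (e5 u hu w hw).1
      intro h
      have := congrArg Prod.fst h
      simp [hs₁ u hu, hs₂ w hw] at this
      linarith
    · have := (e5 w hw u hu).2
      intro h
      have := congrArg Prod.fst h
      simp [hs₂ u hu, hs₁ w hw] at this
      linarith
    · simpa [hs₂ u hu, hs₂ w hw] using h₂.disj u hu w hw

/-- Disjoint row drawings without edges between them combine to one. The reflection in the origin
exchanges left and right, so the second half of the conditions comes from `half_juxtapose` with the
two parts swapped. -/
lemma row_juxtapose {V : Type*} [DecidableEq V] {G : SimpleGraph V} {S₁ S₂ : Finset V}
    {R₁ R₂ R : Set V} {A₁ B₁ A₂ B₂ : V → ℝ × ℝ}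
    (h₁ : Row G S₁ R₁ A₁ B₁) (h₂ : Row G S₂ R₂ A₂ B₂) (hne₁ : S₁.Nonempty) (hne₂ : S₂.Nonempty)
    (hd : Disjoint S₁ S₂) (hno : ∀ u ∈ S₁, ∀ v ∈ S₂, ¬ G.Adj u v)
    (hR₁ : ∀ u ∈ S₁, u ∈ R ↔ u ∈ R₁) (hR₂ : ∀ u ∈ S₂, u ∈ R ↔ u ∈ R₂) :
    ∃ A B, Row G (S₁ ∪ S₂) R A B := by
  set A : V → ℝ × ℝ := fun u => if u ∈ S₁ then A₁ u else A₂ u with hA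
  set B : V → ℝ × ℝ := fun u => if u ∈ S₁ then B₁ u else B₂ u with hB
  set s : V → ℝ := fun u => if u ∈ S₁ then -1 else 1 with hs
  have n2 : ∀ u ∈ S₂, u ∉ S₁ := fun u hu h => Finset.disjoint_left.1 hd h hu
  have a1 : ∀ u ∈ S₁, A u = A₁ u := fun u hu => by simp [hA, hu]
  have b1 : ∀ u ∈ S₁, B u = B₁ u := fun u hu => by simp [hB, hu]
  have a2 : ∀ u ∈ S₂, A u = A₂ u := fun u hu => by simp [hA, n2 u hu]
  have b2 : ∀ u ∈ S₂, B u = B₂ u := fun u hu => by simp [hB, n2 u hu]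
  have s1 : ∀ u ∈ S₁, s u = -1 := fun u hu => by simp [hs, hu]
  have s2 : ∀ u ∈ S₂, s u = 1 := fun u hu => by simp [hs, n2 u hu]
  have k1 := h₁.1.congr a1 b1
  have k2 := h₂.1.congr a2 b2
  have k1' : Half G S₁ R₁ (-B) (-A) :=
    h₁.2.congr (fun u hu => by simp [b1 u hu]) (fun u hu => by simp [a1 u hu])
  have k2' : Half G S₂ R₂ (-B) (-A) :=
    h₂.2.congr (fun u hu => by simp [b2 u hu]) (fun u hu => by simp [a2 u hu])
  have F1 := half_juxtapose (R := R) (s := s) k1 k2 hne₁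
    (by
      obtain ⟨l, hl, -, -, h⟩ := k1'.left hne₁
      exact ⟨l, hl, fun u hu => by simpa using h u hu⟩) s1 s2 hno hR₁ hR₂
  have F2 := half_juxtapose (R := R) (s := -s) k2' k1' hne₂
    (by
      obtain ⟨l, hl, -, -, h⟩ := k2.left hne₂
      exact ⟨l, hl, fun u hu => by simpa using h u hu⟩)
    (fun u hu => by simp [s2 u hu]) (fun u hu => by simp [s1 u hu])
    (fun u hu v hv h => hno v hv u hu h.symm) hR₂ hR₁
  obtain ⟨L, l1, l2⟩ := (F1.and F2).exists
  refine ⟨_, _, l1, ?_⟩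
  rw [Finset.union_comm] at l2
  refine l2.congr (fun u _ => ?_) (fun u _ => ?_) <;> ext <;> simp <;> ring

/-! ### Adding a root -/

/-- The counterclockwise rotation by `π/2 - arctan η`, scaled by `√(1 + η²)`: for small `η > 0` the
old downward direction becomes almost the new rightward one and the old rightward direction almost
the new upward one, while the old upward direction still points slightly upward. -/
def rot (η : ℝ) (p : ℝ × ℝ) : ℝ × ℝ := (η * p.1 - p.2, p.1 + η * p.2)

/-- The drawing `A` extended by placing the new root `r` at `p`, then rotated and scaled. -/
def addRoot {V : Type*} [DecidableEq V] (η κ : ℝ) (r : V) (p : ℝ × ℝ) (A : V → ℝ × ℝ) :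
    V → ℝ × ℝ := fun u => κ • rot η (if u = r then p else A u)

lemma addRoot_self {V : Type*} [DecidableEq V] (η κ : ℝ) (r : V) (p : ℝ × ℝ) (A : V → ℝ × ℝ) :
    addRoot η κ r p A r = κ • rot η p := by simp [addRoot]

lemma addRoot_ne {V : Type*} [DecidableEq V] (η κ : ℝ) {r u : V} (p : ℝ × ℝ) (A : V → ℝ × ℝ)
    (h : u ≠ r) : addRoot η κ r p A u = κ • rot η (A u) := by simp [addRoot, h]

lemma neg_addRoot {V : Type*} [DecidableEq V] (η κ : ℝ) (r : V) (p : ℝ × ℝ) (A : V → ℝ × ℝ) :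
    -addRoot η κ r p A = addRoot η κ r (-p) (-A) := by
  funext u
  by_cases h : u = r
  · subst h; ext <;> simp [addRoot, rot] <;> ring
  · ext <;> simp [addRoot, rot, h] <;> ring

lemma ip_rot (η κ : ℝ) (p q a b : ℝ × ℝ) :
    ip (κ • rot η p - κ • rot η q) (κ • rot η a - κ • rot η b) =
      κ ^ 2 * (1 + η ^ 2) * ip (p - q) (a - b) := by
  simp [ip, rot]; ring

lemma ip_rot_neg {η κ : ℝ} (hκ : 0 < κ) {p q a b : ℝ × ℝ} (h : ip (p - q) (a - b) < 0) :
    ip (κ • rot η p - κ • rot η q) (κ • rot η a - κ • rot η b) < 0 := by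
  rw [ip_rot]
  exact mul_neg_of_pos_of_neg (by positivity) h

/-- Adding a far away root, one half of the conditions. The hypotheses `hη₁`, `hη₂`, `hκ₁` say that
`η` and `κ` are small enough for the old points, which does not involve `T`. -/
lemma half_addRoot {V : Type*} [DecidableEq V] {G : SimpleGraph V} {S : Finset V} {R : Set V}
    {A B : V → ℝ × ℝ} {η κ : ℝ} {r : V} (m : ℝ × ℝ)
    (h : Half G S R A B) (hB : ∀ w ∈ S, (B w).2 < 1) (hη : 0 < η) (hκ : 0 < κ)
    (hr : r ∉ S) (hadj : ∀ v ∈ S, G.Adj r v ↔ v ∈ R)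
    (hη₁ : ∀ u ∈ S, ∀ v ∈ S, G.Adj u v → (rot η (A u)).1 ≠ (rot η (A v)).1 ∧
      (rot η (A u)).2 ≠ (rot η (A v)).2)
    (hη₂ : ∀ u ∈ S, ∃ w ∈ S, (rot η (A u)).2 < (rot η (B w)).2)
    (hκ₁ : ∀ u ∈ S, -1 < κ * (rot η (A u)).2) :
    ∀ᶠ T : ℝ in atTop, Half G (insert r S) {r}
      (addRoot η κ r (m + T • (0, 1)) A) (addRoot η κ r (m + T • (0, -1)) B) := by
  have E1 : ∀ᶠ T : ℝ in atTop, ∀ u ∈ S, ∀ v ∈ S, G.Adj u v →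
      ip (m + T • ((0 : ℝ), (-1 : ℝ)) - A u) (A v - A u) < 0 ∨
      ip (m + T • ((0 : ℝ), (-1 : ℝ)) - A v) (A u - A v) < 0 := by
    simp only [eventually_all_finset, eventually_imp_distrib_left]
    intro u hu v hv e
    refine eventually_leaves_strip _ _ _ _ ?_
    have := h.edge_y u hu v hv e
    simp only [ip, Prod.snd_sub, zero_mul, zero_add]
    intro h
    exact this (by linarith)
  -- No point of `B` is above a root `v`, so the strip of the edge from `v` to the far root is free.
  have E2 : ∀ᶠ T : ℝ in atTop, ∀ v ∈ S, v ∈ R → ∀ w ∈ S,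
      ip (B w - A v) (m - A v) + T * ((B w).2 - (A v).2) < 0 := by
    simp only [eventually_all_finset, eventually_imp_distrib_left]
    intro v hv hR w hw
    exact eventually_affine_neg _ (by linarith [h.top v hv hR, hB w hw])
  have E3 : ∀ᶠ T : ℝ in atTop, ∀ v ∈ S, ip (m - A v) (m - A v) + T * 0 + T * T * (-1) < 0 := by
    simp only [eventually_all_finset]
    intro v hv
    exact eventually_quad_neg _ _ (by norm_num)
  -- A point of `B` above the non-root `u` is in the disk spanned by `u` and the far root.
  have E4 : ∀ᶠ T : ℝ in atTop, ∀ u ∈ S, u ∉ R → ∃ w ∈ S,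
      ip (B w - A u) (B w - m) + T * (-((B w).2 - (A u).2)) < 0 := by
    simp only [eventually_all_finset, eventually_imp_distrib_left]
    intro u hu hR
    obtain ⟨w, hw, hlt⟩ := h.wit u hu hR
    filter_upwards [eventually_affine_neg (ip (B w - A u) (B w - m))
      (c := -((B w).2 - (A u).2)) (by linarith)] with T hT
    exact ⟨w, hw, hT⟩
  have E5 : ∀ᶠ T : ℝ in atTop, ∀ u ∈ S,
      ((rot η m).1 - (rot η (A u)).1 + T * (-1) < 0 ∧
       (rot η m).1 - (rot η (B u)).1 + T * (-1) < 0 ∧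
       (rot η (A u)).1 - (rot η m).1 + T * (-1) < 0) ∧
      (rot η (A u)).2 - (rot η m).2 + T * (-η) < 0 := by
    simp only [eventually_all_finset, eventually_and]
    intro v hv
    exact ⟨⟨eventually_affine_neg _ (by norm_num), eventually_affine_neg _ (by norm_num),
      eventually_affine_neg _ (by norm_num)⟩, eventually_affine_neg _ (by linarith)⟩
  have E6 : ∀ᶠ T : ℝ in atTop, 1 - κ * (rot η m).2 + T * (-(κ * η)) < 0 :=
    eventually_affine_neg _ (by nlinarith [mul_pos hκ hη])
  filter_upwards [E1, E2, E3, E4, E5, E6, eventually_gt_atTop 0] with T e1 e2 e3 e4 e5 e6 hT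
  have ne : ∀ u ∈ S, u ≠ r := fun u hu h => hr (h ▸ hu)
  have x1 : ∀ u ∈ S, (rot η (m + T • (0, 1))).1 < (rot η (A u)).1 := fun u hu => by
    have := (e5 u hu).1.1
    simp [rot] at this ⊢
    linarith
  have x2 : ∀ u ∈ S, (rot η (m + T • (0, 1))).1 < (rot η (B u)).1 := fun u hu => by
    have := (e5 u hu).1.2.1
    simp [rot] at this ⊢
    linarith
  have x3 : ∀ u ∈ S, (rot η (A u)).1 < (rot η (m + T • (0, -1))).1 := fun u hu => by
    have := (e5 u hu).1.2.2
    simp [rot] at this ⊢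
    linarith
  have x4 : (rot η (m + T • (0, 1))).1 < (rot η (m + T • (0, -1))).1 := by
    simp [rot]
    linarith
  have y1 : ∀ u ∈ S, (rot η (A u)).2 < (rot η (m + T • (0, 1))).2 := fun u hu => by
    have := (e5 u hu).2
    simp [rot] at this ⊢
    linarith
  have y2 : 1 < κ * (rot η (m + T • (0, 1))).2 := by
    simp [rot] at e6 ⊢
    linarith
  -- The edges at the new root.
  have star : ∀ v ∈ S, v ∈ R → ∀ w ∈ insert r S,
      ip (addRoot η κ r (m + T • (0, -1)) B w - addRoot η κ r (m + T • (0, 1)) A v)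
        (addRoot η κ r (m + T • (0, 1)) A r - addRoot η κ r (m + T • (0, 1)) A v) < 0 := by
    intro v hv hR w iw
    rcases Finset.mem_insert.1 iw with rfl | hw
    · simp only [addRoot_self, addRoot_ne _ _ _ _ (ne v hv)]
      apply ip_rot_neg hκ
      have := e3 v hv
      simp [ip] at this ⊢
      linarith
    · simp only [addRoot_self, addRoot_ne _ _ _ _ (ne v hv), addRoot_ne _ _ _ _ (ne w hw)]
      apply ip_rot_neg hκ
      have := e2 v hv hR w hw
      simp [ip] at this ⊢
      linarith
  have nostar : ∀ u ∈ S, u ∉ R → ∃ w ∈ S,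
      ip (addRoot η κ r (m + T • (0, -1)) B w - addRoot η κ r (m + T • (0, 1)) A u)
        (addRoot η κ r (m + T • (0, -1)) B w - addRoot η κ r (m + T • (0, 1)) A r) < 0 := by
    intro u hu hR
    obtain ⟨w, hw, hlt⟩ := e4 u hu hR
    refine ⟨w, hw, ?_⟩
    simp only [addRoot_self, addRoot_ne _ _ _ _ (ne u hu), addRoot_ne _ _ _ _ (ne w hw)]
    apply ip_rot_neg hκ
    simp [ip] at hlt ⊢
    linarith
  constructor
  · intro u iu v iv e w iw
    rcases Finset.mem_insert.1 iu with rfl | hu <;> rcases Finset.mem_insert.1 iv with rfl | hv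
    · exact absurd e (G.loopless.irrefl _)
    · exact Or.inr (star v hv ((hadj v hv).1 e) w iw)
    · exact Or.inl (star u hu ((hadj u hu).1 e.symm) w iw)
    · rcases Finset.mem_insert.1 iw with rfl | hw
      · simp only [addRoot_self, addRoot_ne _ _ _ _ (ne u hu), addRoot_ne _ _ _ _ (ne v hv)]
        exact (e1 u hu v hv e).imp (ip_rot_neg hκ) (ip_rot_neg hκ)
      · simp only [addRoot_ne _ _ _ _ (ne w hw), addRoot_ne _ _ _ _ (ne u hu),
          addRoot_ne _ _ _ _ (ne v hv)]
        exact (h.adj u hu v hv e w hw).imp (ip_rot_neg hκ) (ip_rot_neg hκ)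
  · intro u iu v iv n e
    rcases Finset.mem_insert.1 iu with rfl | hu <;> rcases Finset.mem_insert.1 iv with rfl | hv
    · exact absurd rfl n
    · obtain ⟨w, hw, hlt⟩ := nostar v hv (fun hR => e ((hadj v hv).2 hR))
      refine ⟨w, Finset.mem_insert_of_mem hw, ?_⟩
      simp only [ip] at hlt ⊢
      linarith
    · obtain ⟨w, hw, hlt⟩ := nostar u hu (fun hR => e ((hadj u hu).2 hR).symm)
      exact ⟨w, Finset.mem_insert_of_mem hw, hlt⟩
    · obtain ⟨w, hw, hlt⟩ := h.nonadj u hu v hv n e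
      refine ⟨w, Finset.mem_insert_of_mem hw, ?_⟩
      simp only [addRoot_ne _ _ _ _ (ne w hw), addRoot_ne _ _ _ _ (ne u hu),
        addRoot_ne _ _ _ _ (ne v hv)]
      exact ip_rot_neg hκ hlt
  · intro _
    refine ⟨r, Finset.mem_insert_self _ _, rfl, fun u iu n => ?_, fun w iw => ?_⟩
    · rcases Finset.mem_insert.1 iu with rfl | hu
      · exact absurd rfl n
      · rw [addRoot_self, addRoot_ne _ _ _ _ (ne u hu)]
        exact mul_lt_mul_of_pos_left (x1 u hu) hκ
    · rcases Finset.mem_insert.1 iw with rfl | hw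
      · rw [addRoot_self, addRoot_self]
        exact mul_lt_mul_of_pos_left x4 hκ
      · rw [addRoot_self, addRoot_ne _ _ _ _ (ne w hw)]
        exact mul_lt_mul_of_pos_left (x2 w hw) hκ
  · intro u iu v iv e
    rcases Finset.mem_insert.1 iu with rfl | hu <;> rcases Finset.mem_insert.1 iv with rfl | hv
    · exact absurd e (G.loopless.irrefl _)
    · rw [addRoot_self, addRoot_ne _ _ _ _ (ne v hv)]
      exact (mul_lt_mul_of_pos_left (x1 v hv) hκ).ne
    · rw [addRoot_self, addRoot_ne _ _ _ _ (ne u hu)]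
      exact (mul_lt_mul_of_pos_left (x1 u hu) hκ).ne'
    · rw [addRoot_ne _ _ _ _ (ne v hv), addRoot_ne _ _ _ _ (ne u hu)]
      exact fun hh => (hη₁ u hu v hv e).1 (mul_left_cancel₀ hκ.ne' hh)
  · intro u iu v iv e
    rcases Finset.mem_insert.1 iu with rfl | hu <;> rcases Finset.mem_insert.1 iv with rfl | hv
    · exact absurd e (G.loopless.irrefl _)
    · rw [addRoot_self, addRoot_ne _ _ _ _ (ne v hv)]
      exact (mul_lt_mul_of_pos_left (y1 v hv) hκ).ne'
    · rw [addRoot_self, addRoot_ne _ _ _ _ (ne u hu)]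
      exact (mul_lt_mul_of_pos_left (y1 u hu) hκ).ne
    · rw [addRoot_ne _ _ _ _ (ne v hv), addRoot_ne _ _ _ _ (ne u hu)]
      exact fun hh => (hη₁ u hu v hv e).2 (mul_left_cancel₀ hκ.ne' hh)
  · intro u _ hR
    obtain rfl : u = r := hR
    rw [addRoot_self]
    exact y2
  · intro u iu
    rcases Finset.mem_insert.1 iu with rfl | hu
    · rw [addRoot_self]
      exact lt_trans (by norm_num) y2
    · rw [addRoot_ne _ _ _ _ (ne u hu)]
      exact hκ₁ u hu
  · intro u iu hR
    rcases Finset.mem_insert.1 iu with rfl | hu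
    · exact absurd rfl hR
    · obtain ⟨w, hw, hlt⟩ := hη₂ u hu
      refine ⟨w, Finset.mem_insert_of_mem hw, ?_⟩
      rw [addRoot_ne _ _ _ _ (ne u hu), addRoot_ne _ _ _ _ (ne w hw)]
      exact mul_lt_mul_of_pos_left hlt hκ
  · intro u iu w iw heq
    have hx := congrArg Prod.fst heq
    rcases Finset.mem_insert.1 iu with rfl | hu <;> rcases Finset.mem_insert.1 iw with rfl | hw
    · rw [addRoot_self, addRoot_self] at hx
      exact (mul_lt_mul_of_pos_left x4 hκ).ne hx
    · rw [addRoot_self, addRoot_ne _ _ _ _ (ne w hw)] at hx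
      exact (mul_lt_mul_of_pos_left (x2 w hw) hκ).ne hx
    · rw [addRoot_self, addRoot_ne _ _ _ _ (ne u hu)] at hx
      exact (mul_lt_mul_of_pos_left (x3 u hu) hκ).ne hx
    · rw [addRoot_ne _ _ _ _ (ne w hw), addRoot_ne _ _ _ _ (ne u hu)] at heq
      have hinj : A u = B w := by
        have h2 := smul_right_injective (ℝ × ℝ) hκ.ne' heq
        have q1 := congrArg Prod.fst h2
        have q2 := congrArg Prod.snd h2
        simp only [rot] at q1 q2
        have z2 : (1 + η ^ 2) * ((A u).2 - (B w).2) = 0 := by linear_combination η * q2 - q1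
        have z1 : (1 + η ^ 2) * ((A u).1 - (B w).1) = 0 := by linear_combination η * q1 + q2
        have hp : (1 + η ^ 2) ≠ 0 := by positivity
        ext
        · linarith [(mul_eq_zero.1 z1).resolve_left hp]
        · linarith [(mul_eq_zero.1 z2).resolve_left hp]
      exact h.disj u hu w hw hinj

/-! ### The supporting parallelogram -/

/-- `p` is a convex combination of the four given points. -/
def InHull (a₀ b₀ a₁ b₁ p : ℝ × ℝ) : Prop :=
  ∃ c₀ c₁ c₂ c₃ : ℝ, 0 ≤ c₀ ∧ 0 ≤ c₁ ∧ 0 ≤ c₂ ∧ 0 ≤ c₃ ∧ c₀ + c₁ + c₂ + c₃ = 1 ∧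
    p = c₀ • a₀ + c₁ • b₀ + c₂ • a₁ + c₃ • b₁

/-- The parallelogram with fixed opposite corners `b₀`, `b₁` and the other two corners
moving to infinity vertically eventually contains every point strictly between `b₀` and `b₁` in
the horizontal direction. -/
lemma eventually_mem_hull {b₀ b₁ p : ℝ × ℝ} (hb : b₀.1 < b₁.1)
    (hp : p = b₀ ∨ p = b₁ ∨ (b₀.1 < p.1 ∧ p.1 < b₁.1)) :
    ∀ᶠ T : ℝ in atTop, InHull ((1 / 2 : ℝ) • (b₀ + b₁) + T • (0, 1)) b₀
      ((1 / 2 : ℝ) • (b₀ + b₁) + T • (0, -1)) b₁ p := by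
  rcases hp with rfl | rfl | ⟨h1, h2⟩
  · exact Eventually.of_forall fun T =>
      ⟨0, 1, 0, 0, by norm_num, by norm_num, by norm_num, by norm_num, by norm_num, by simp⟩
  · exact Eventually.of_forall fun T =>
      ⟨0, 0, 0, 1, by norm_num, by norm_num, by norm_num, by norm_num, by norm_num, by simp⟩
  · have hd : 0 < b₁.1 - b₀.1 := by linarith
    -- `l` is the horizontal position relative to the centre, `e` the remaining vertical offset.
    obtain ⟨l, hl⟩ : ∃ l : ℝ, l * (b₁.1 - b₀.1) = 2 * p.1 - b₀.1 - b₁.1 :=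
      ⟨(2 * p.1 - b₀.1 - b₁.1) / (b₁.1 - b₀.1), by field_simp⟩
    have l1 : l < 1 := by nlinarith
    have l2 : -1 < l := by nlinarith
    have l3 : |l| < 1 := abs_lt.2 ⟨l2, l1⟩
    obtain ⟨e, he⟩ : ∃ e : ℝ, e = p.2 - (b₀.2 + b₁.2) / 2 - l * (b₁.2 - b₀.2) / 2 := ⟨_, rfl⟩
    filter_upwards [eventually_affine_neg e (c := -(1 - |l|)) (by linarith),
      eventually_affine_neg (-e) (c := -(1 - |l|)) (by linarith), eventually_gt_atTop 0]
      with T t1 t2 hT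
    obtain ⟨μ, hμ⟩ : ∃ μ : ℝ, μ * T = e := ⟨e / T, by field_simp⟩
    have m1 : μ < 1 - |l| := by nlinarith
    have m2 : -(1 - |l|) < μ := by nlinarith
    refine ⟨(1 - |l| + μ) / 2, (|l| - l) / 2, (1 - |l| - μ) / 2, (|l| + l) / 2, by linarith,
      by linarith [le_abs_self l], by linarith, by linarith [neg_abs_le l], by ring, ?_⟩
    ext
    · simp
      linear_combination (-1 / 2) * hl
    · simp
      linear_combination -he - hμ

lemma eventually_rot_lt {p q : ℝ × ℝ} (h : p.1 < q.1) :
    ∀ᶠ η : ℝ in 𝓝[>] 0, (rot η p).2 < (rot η q).2 := by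
  filter_upwards [eventually_small_pos (q.2 - p.2) (sub_pos.2 h)] with η hη
  simp only [rot]
  linarith

lemma eventually_rot_ne {p q : ℝ × ℝ} (h1 : p.1 ≠ q.1) (h2 : p.2 ≠ q.2) :
    ∀ᶠ η : ℝ in 𝓝[>] 0, (rot η p).1 ≠ (rot η q).1 ∧ (rot η p).2 ≠ (rot η q).2 := by
  have aux : ∀ a c : ℝ, c ≠ 0 → ∀ᶠ η : ℝ in 𝓝[>] 0, c + η * a ≠ 0 := by
    intro a c hc
    rcases lt_or_gt_of_ne hc with hc | hc
    · filter_upwards [eventually_small_pos (-a) (neg_pos.2 hc)] with η hη h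
      linarith
    · filter_upwards [eventually_small_pos a hc] with η hη h
      linarith
  filter_upwards [aux (p.1 - q.1) (q.2 - p.2) (sub_ne_zero.2 h2.symm),
    aux (p.2 - q.2) (p.1 - q.1) (sub_ne_zero.2 h1)] with η e1 e2
  simp only [rot]
  exact ⟨fun h => e1 (by linarith), fun h => e2 (by linarith)⟩

/-- The drawing `(A, B)` of the vertices `S` and the root `r` is supported by the nicely oriented
parallelogram `a₀ b₀ a₁ b₁` with strip ratio less than `ε`, in coordinates; `R` contains the
children of `r`. -/
structure Para {V : Type*} (S : Finset V) (R : Set V) (r : V) (A B : V → ℝ × ℝ)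
    (a₀ b₀ a₁ b₁ : ℝ × ℝ) (ε : ℝ) : Prop where
  rootA : A r = a₀
  rootB : B r = a₁
  sum : a₀ + a₁ = b₀ + b₁
  diag : ip (b₀ - b₁) (b₀ - b₁) < ip (a₀ - a₁) (a₀ - a₁)
  angle : 0 < ip (b₀ - a₀) (b₁ - a₀)
  y₁ : a₁.2 < b₀.2
  y₂ : b₀.2 < b₁.2
  y₃ : b₁.2 < a₀.2
  x₁ : a₀.1 < b₀.1
  x₂ : b₀.1 < b₁.1
  x₃ : b₁.1 < a₁.1
  ratio : b₁.2 - b₀.2 < ε * (a₀.2 - a₁.2)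
  hullA : ∀ u ∈ insert r (S : Set V), InHull a₀ b₀ a₁ b₁ (A u)
  hullB : ∀ u ∈ insert r (S : Set V), InHull a₀ b₀ a₁ b₁ (B u)
  firstA : S.Nonempty → ∃ f ∈ S, f ∈ R ∧ A f = b₀
  firstB : S.Nonempty → ∃ l ∈ S, l ∈ R ∧ B l = b₁
  midA : ∀ u ∈ S, A u = b₀ ∨ (b₀.2 < (A u).2 ∧ (A u).2 < b₁.2)
  midB : ∀ u ∈ S, B u = b₁ ∨ (b₀.2 < (B u).2 ∧ (B u).2 < b₁.2)

lemma InHull.map {a₀ b₀ a₁ b₁ p : ℝ × ℝ} (h : InHull a₀ b₀ a₁ b₁ p) (η κ : ℝ) :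
    InHull (κ • rot η a₀) (κ • rot η b₀) (κ • rot η a₁) (κ • rot η b₁) (κ • rot η p) := by
  obtain ⟨c₀, c₁, c₂, c₃, h0, h1, h2, h3, hs, rfl⟩ := h
  refine ⟨c₀, c₁, c₂, c₃, h0, h1, h2, h3, hs, ?_⟩
  ext <;> simp [rot] <;> ring

/-- The row drawing of a forest extends to a row drawing of the tree obtained by adding a root joined
to all roots of the forest. The parameters are chosen in the order `η`, `κ`, `T`. -/
lemma row_addRoot {V : Type*} [DecidableEq V] {G : SimpleGraph V} {S : Finset V} {R : Set V}
    {A B : V → ℝ × ℝ} {r : V} (h : Row G S R A B) (hr : r ∉ S)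
    (hadj : ∀ v ∈ S, G.Adj r v ↔ v ∈ R) {ε : ℝ} (hε : 0 < ε) :
    ∃ A' B' a₀ b₀ a₁ b₁, Row G (insert r S) {r} A' B' ∧ Para S R r A' B' a₀ b₀ a₁ b₁ ε := by
  -- Without children, `b₀` and `b₁` are chosen freely.
  obtain ⟨b₀, b₁, hx, hy, hA, hB, hf, hl⟩ : ∃ b₀ b₁ : ℝ × ℝ, b₀.1 < b₁.1 ∧ b₁.2 < b₀.2 ∧
      (∀ u ∈ S, A u = b₀ ∨ (b₀.1 < (A u).1 ∧ (A u).1 < b₁.1)) ∧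
      (∀ u ∈ S, B u = b₁ ∨ (b₀.1 < (B u).1 ∧ (B u).1 < b₁.1)) ∧
      (S.Nonempty → ∃ f ∈ S, f ∈ R ∧ A f = b₀) ∧
      (S.Nonempty → ∃ l ∈ S, l ∈ R ∧ B l = b₁) := by
    rcases S.eq_empty_or_nonempty with rfl | hne
    · exact ⟨(-1, 1), (1, -1), by norm_num, by norm_num, by simp, by simp, by simp, by simp⟩
    · obtain ⟨f, hfS, hfR, f1, f2⟩ := h.1.left hne
      obtain ⟨l, hlS, hlR, l1, l2⟩ := h.2.left hne
      have t1 := h.1.top f hfS hfR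
      have t2 := h.2.top l hlS hlR
      simp at l1 l2 t2
      refine ⟨A f, B l, f2 l hlS, by linarith, fun u hu => ?_, fun u hu => ?_,
        fun _ => ⟨f, hfS, hfR, rfl⟩, fun _ => ⟨l, hlS, hlR, rfl⟩⟩
      · by_cases e : u = f
        · exact Or.inl (by rw [e])
        · exact Or.inr ⟨f1 u hu e, l2 u hu⟩
      · by_cases e : u = l
        · exact Or.inl (by rw [e])
        · exact Or.inr ⟨f2 u hu, l1 u hu e⟩
  have A1 : ∀ u ∈ S, (A u).1 < b₁.1 := fun u hu => by
    rcases hA u hu with e | e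
    · rwa [e]
    · exact e.2
  have B1 : ∀ u ∈ S, b₀.1 < (B u).1 := fun u hu => by
    rcases hB u hu with e | e
    · rwa [e]
    · exact e.1
  have N1 : ∀ᶠ η : ℝ in 𝓝[>] 0, ∀ u ∈ S, ∀ v ∈ S, G.Adj u v →
      ((rot η (A u)).1 ≠ (rot η (A v)).1 ∧ (rot η (A u)).2 ≠ (rot η (A v)).2) ∧
      ((rot η ((-B) u)).1 ≠ (rot η ((-B) v)).1 ∧ (rot η ((-B) u)).2 ≠ (rot η ((-B) v)).2) := by
    simp only [eventually_all_finset, eventually_imp_distrib_left]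
    intro u hu v hv e
    exact (eventually_rot_ne (h.1.edge_x u hu v hv e) (h.1.edge_y u hu v hv e)).and
      (eventually_rot_ne (h.2.edge_x u hu v hv e) (h.2.edge_y u hu v hv e))
  have N2 : ∀ᶠ η : ℝ in 𝓝[>] 0, ∀ u ∈ S,
      (rot η (A u)).2 < (rot η b₁).2 ∧ (rot η b₀).2 < (rot η (B u)).2 := by
    simp only [eventually_all_finset]
    intro u hu
    exact (eventually_rot_lt (A1 u hu)).and (eventually_rot_lt (B1 u hu))
  have N3 : ∀ᶠ η : ℝ in 𝓝[>] 0, ∀ u ∈ S,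
      (A u = b₀ ∨ (rot η b₀).2 < (rot η (A u)).2) ∧
      (B u = b₁ ∨ (rot η (B u)).2 < (rot η b₁).2) := by
    simp only [eventually_all_finset]
    intro u hu
    refine Eventually.and ?_ ?_
    · rcases hA u hu with e | e
      · exact Eventually.of_forall fun _ => Or.inl e
      · exact (eventually_rot_lt e.1).mono fun _ => Or.inr
    · rcases hB u hu with e | e
      · exact Eventually.of_forall fun _ => Or.inl e
      · exact (eventually_rot_lt e.2).mono fun _ => Or.inr
  have N4 : ∀ᶠ η : ℝ in 𝓝[>] 0, 0 < η := eventually_mem_nhdsWithin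
  obtain ⟨η, n1, n2, n3, hη, n5⟩ :=
    (N1.and (N2.and (N3.and (N4.and (eventually_rot_lt hx))))).exists
  obtain ⟨κ, hκ, k1⟩ : ∃ κ : ℝ, 0 < κ ∧ ∀ u ∈ S,
      0 < 1 + κ * (rot η (A u)).2 ∧ 0 < 1 + κ * (rot η ((-B) u)).2 := by
    have K1 : ∀ᶠ κ : ℝ in 𝓝[>] 0, 0 < κ := eventually_mem_nhdsWithin
    have K2 : ∀ᶠ κ : ℝ in 𝓝[>] 0, ∀ u ∈ S,
        0 < 1 + κ * (rot η (A u)).2 ∧ 0 < 1 + κ * (rot η ((-B) u)).2 := by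
      simp only [eventually_all_finset]
      intro u hu
      exact (eventually_small_pos _ one_pos).and (eventually_small_pos _ one_pos)
    exact (K1.and K2).exists
  set m : ℝ × ℝ := (1 / 2 : ℝ) • (b₀ + b₁) with hm
  have F1 := half_addRoot m h.1 (fun w hw => by have := h.2.low w hw; simp at this; linarith)
    hη hκ hr hadj (fun u hu v hv e => (n1 u hu v hv e).1)
    (fun u hu => by
      obtain ⟨l, hlS, -, hl⟩ := hl ⟨u, hu⟩
      exact ⟨l, hlS, by rw [hl]; exact (n2 u hu).1⟩)
    (fun u hu => by linarith [(k1 u hu).1])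
  have F2 := half_addRoot (-m) h.2
    (fun w hw => by have := h.1.low w hw; simp; linarith)
    hη hκ hr hadj (fun u hu v hv e => (n1 u hu v hv e).2)
    (fun u hu => by
      obtain ⟨f, hfS, -, hf⟩ := hf ⟨u, hu⟩
      refine ⟨f, hfS, ?_⟩
      have := (n2 u hu).2
      rw [← hf] at this
      simp [rot] at this ⊢
      linarith)
    (fun u hu => by linarith [(k1 u hu).2])
  have F3 : ∀ᶠ T : ℝ in atTop, ∀ u ∈ S,
      InHull (m + T • (0, 1)) b₀ (m + T • (0, -1)) b₁ (A u) ∧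
      InHull (m + T • (0, 1)) b₀ (m + T • (0, -1)) b₁ (B u) := by
    simp only [eventually_all_finset]
    intro u hu
    refine (eventually_mem_hull hx ?_).and (eventually_mem_hull hx ?_)
    · exact (hA u hu).imp_right Or.inr
    · exact Or.inr (hB u hu)
  -- The remaining conditions are, in this order: longer diagonal, angle, order of the ordinates,
  -- order of the abscissae, strip ratio.
  have F4 : ∀ᶠ T : ℝ in atTop, ip (b₀ - b₁) (b₀ - b₁) + T * 0 + T * T * (-4) < 0 :=
    eventually_quad_neg _ _ (by norm_num)
  have F5 : ∀ᶠ T : ℝ in atTop, -ip (b₀ - m) (b₁ - m) + T * 0 + T * T * (-1) < 0 :=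
    eventually_quad_neg _ _ (by norm_num)
  have F6 : ∀ᶠ T : ℝ in atTop, (rot η m).2 - (rot η b₀).2 + T * (-η) < 0 :=
    eventually_affine_neg _ (by linarith)
  have F7 : ∀ᶠ T : ℝ in atTop, (rot η b₁).2 - (rot η m).2 + T * (-η) < 0 :=
    eventually_affine_neg _ (by linarith)
  have F8 : ∀ᶠ T : ℝ in atTop, (rot η m).1 - (rot η b₀).1 + T * (-1) < 0 :=
    eventually_affine_neg _ (by norm_num)
  have F9 : ∀ᶠ T : ℝ in atTop, (rot η b₁).1 - (rot η m).1 + T * (-1) < 0 :=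
    eventually_affine_neg _ (by norm_num)
  have F10 : ∀ᶠ T : ℝ in atTop, (rot η b₁).2 - (rot η b₀).2 + T * (-(2 * (ε * η))) < 0 :=
    eventually_affine_neg _ (by nlinarith [mul_pos hε hη])
  obtain ⟨T, f1, f2, f3, f4, f5, f6, f7, f8, f9, f10⟩ := (F1.and (F2.and (F3.and (F4.and
    (F5.and (F6.and (F7.and (F8.and (F9.and F10))))))))).exists
  have ne : ∀ u ∈ S, u ≠ r := fun u hu h => hr (h ▸ hu)
  have pos : 0 < κ ^ 2 * (1 + η ^ 2) := by positivity
  refine ⟨addRoot η κ r (m + T • (0, 1)) A, addRoot η κ r (m + T • (0, -1)) B,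
    κ • rot η (m + T • (0, 1)), κ • rot η b₀, κ • rot η (m + T • (0, -1)), κ • rot η b₁,
    ⟨f1, ?_⟩, ?_⟩
  · rw [neg_addRoot, neg_addRoot]
    convert f2 using 2
    all_goals ext <;> simp <;> ring
  constructor
  · exact addRoot_self ..
  · exact addRoot_self ..
  · ext <;> simp [rot, hm] <;> ring
  · rw [ip_rot, ip_rot]
    apply mul_lt_mul_of_pos_left _ pos
    simp [ip] at f4 ⊢
    linarith
  · rw [ip_rot]
    apply mul_pos pos
    simp [ip, hm] at f5 ⊢
    linarith
  · apply mul_lt_mul_of_pos_left _ hκ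
    simp [rot] at f6 ⊢
    linarith
  · exact mul_lt_mul_of_pos_left n5 hκ
  · apply mul_lt_mul_of_pos_left _ hκ
    simp [rot] at f7 ⊢
    linarith
  · apply mul_lt_mul_of_pos_left _ hκ
    simp [rot] at f8 ⊢
    linarith
  · apply mul_lt_mul_of_pos_left _ hκ
    simp only [rot]
    nlinarith
  · apply mul_lt_mul_of_pos_left _ hκ
    simp [rot] at f9 ⊢
    linarith
  · have : κ * ((rot η b₁).2 - (rot η b₀).2) < κ * (T * (2 * (ε * η))) :=
      mul_lt_mul_of_pos_left (by linarith) hκ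
    simp [rot] at this ⊢
    linarith
  · intro u hu
    rcases hu with rfl | hu
    · rw [addRoot_self]
      exact ⟨1, 0, 0, 0, by norm_num, by norm_num, by norm_num, by norm_num, by norm_num, by simp⟩
    · rw [addRoot_ne _ _ _ _ (ne u hu)]
      exact (f3 u hu).1.map η κ
  · intro u hu
    rcases hu with rfl | hu
    · rw [addRoot_self]
      exact ⟨0, 0, 1, 0, by norm_num, by norm_num, by norm_num, by norm_num, by norm_num, by simp⟩
    · rw [addRoot_ne _ _ _ _ (ne u hu)]
      exact (f3 u hu).2.map η κ
  · intro hne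
    obtain ⟨f, hfS, hfR, hf⟩ := hf hne
    exact ⟨f, hfS, hfR, by rw [addRoot_ne _ _ _ _ (ne f hfS), hf]⟩
  · intro hne
    obtain ⟨f, hfS, hfR, hf⟩ := hl hne
    exact ⟨f, hfS, hfR, by rw [addRoot_ne _ _ _ _ (ne f hfS), hf]⟩
  · intro u hu
    rw [addRoot_ne _ _ _ _ (ne u hu)]
    rcases (n3 u hu).1 with e | e
    · exact Or.inl (by rw [e])
    · exact Or.inr ⟨mul_lt_mul_of_pos_left e hκ, mul_lt_mul_of_pos_left (n2 u hu).1 hκ⟩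
  · intro u hu
    rw [addRoot_ne _ _ _ _ (ne u hu)]
    rcases (n3 u hu).2 with e | e
    · exact Or.inl (by rw [e])
    · exact Or.inr ⟨mul_lt_mul_of_pos_left (n2 u hu).2 hκ, mul_lt_mul_of_pos_left e hκ⟩

/-! ### Induction over rooted forests -/

/-- A tree rooted at `r` is given by a parent function along which `dep` decreases. -/
lemma exists_parent {V : Type*} {G : SimpleGraph V} (hG : G.IsTree) (r : V) :
    ∃ (par : V → V) (dep : V → ℕ), (∀ u, u ≠ r → G.Adj u (par u) ∧ dep (par u) < dep u) ∧
      ∀ u v, G.Adj u v → (u ≠ r ∧ par u = v) ∨ (v ≠ r ∧ par v = u) := by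
  classical
  choose f hf hf' using (hG.existsUnique_path · r)
  refine ⟨fun u => (f u).snd, fun u => (f u).length, fun u hu => ?_, fun u v e => ?_⟩
  · have hn : ¬ (f u).Nil := SimpleGraph.Walk.not_nil_of_ne hu
    refine ⟨(f u).adj_snd hn, ?_⟩
    have h1 := hf' _ _ (hf u).tail
    have h2 := SimpleGraph.Walk.length_tail_add_one hn
    simp only [← h1]
    omega
  · by_cases hv : v ∈ (f u).support
    · left
      refine ⟨?_, (hG.isAcyclic.eq_snd_of_adj_start (hf u) e hv).symm⟩
      rintro rfl
      have := hf' u .nil .nil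
      rw [← this] at hv
      simp at hv
      exact e.ne hv.symm
    · right
      refine ⟨?_, ?_⟩
      · rintro rfl
        exact hv (f u).end_mem_support
      · have := hf' v (.cons e.symm (f u)) ((SimpleGraph.Walk.cons_isPath_iff _ _).2 ⟨hf u, hv⟩)
        show (f v).snd = u
        rw [← this]
        simp

/-- Every set of vertices closed under taking children has a row drawing, in which the roots are
the vertices whose parent is missing. -/
lemma exists_row {V : Type*} [DecidableEq V] {G : SimpleGraph V} {r : V} {par : V → V}
    {dep : V → ℕ} (hpar : ∀ u, u ≠ r → G.Adj u (par u) ∧ dep (par u) < dep u)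
    (hadj : ∀ u v, G.Adj u v → (u ≠ r ∧ par u = v) ∨ (v ≠ r ∧ par v = u)) (n : ℕ) :
    ∀ S : Finset V, S.card = n → r ∉ S → (∀ v, v ≠ r → par v ∈ S → v ∈ S) →
      ∃ A B, Row G S {u | par u ∉ S} A B := by
  classical
  induction n using Nat.strong_induction_on with
  | _ n ih =>
  intro S hn hrS hS
  rcases S.eq_empty_or_nonempty with rfl | hne
  · exact ⟨0, 0, by constructor <;> simp, by constructor <;> simp⟩
  have ner : ∀ u ∈ S, u ≠ r := fun u hu h => hrS (h ▸ hu)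
  -- A vertex of least depth is a root of the forest on `S`.
  obtain ⟨u, huS, humin⟩ := Finset.exists_min_image S dep hne
  have hpu : par u ∉ S := fun h => by
    have := humin _ h
    have := (hpar u (ner u huS)).2
    omega
  -- The descendants of `u` inside `S`.
  set D := S.filter (fun v => Relation.ReflTransGen (fun a b => par a = b ∧ b ∈ S) v u) with hD
  have huD : u ∈ D := Finset.mem_filter.2 ⟨huS, .refl⟩
  have hDS : D ⊆ S := Finset.filter_subset _ _
  have hD1 : ∀ v, v ≠ r → par v ∈ D → v ∈ D := fun v hv h => by
    obtain ⟨h1, h2⟩ := Finset.mem_filter.1 h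
    exact Finset.mem_filter.2 ⟨hS v hv h1, .head ⟨rfl, h1⟩ h2⟩
  have hD2 : ∀ v ∈ D, v = u ∨ par v ∈ D := fun v hv => by
    obtain ⟨h1, h2⟩ := Finset.mem_filter.1 hv
    rcases h2.cases_head with h | ⟨c, ⟨rfl, hc⟩, h⟩
    · exact Or.inl h
    · exact Or.inr (Finset.mem_filter.2 ⟨hc, h⟩)
  -- Either `u` is the only root and is removed, or `S` splits into `D` and its complement.
  by_cases hDeq : D = S
  · have hroot : ∀ v ∈ S, v = u ∨ par v ∈ S := by rw [← hDeq]; exact hD2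
    obtain ⟨A, B, hAB⟩ := ih (S.erase u).card (hn ▸ Finset.card_erase_lt_of_mem huS) (S.erase u)
      rfl (fun h => hrS (Finset.mem_of_mem_erase h)) (fun v hv h => by
        refine Finset.mem_erase.2 ⟨?_, hS v hv (Finset.mem_of_mem_erase h)⟩
        rintro rfl
        exact hpu (Finset.mem_of_mem_erase h))
    obtain ⟨A', B', -, -, -, -, hAB', -⟩ := row_addRoot hAB (Finset.notMem_erase u S)
      (fun v hv => by
        have hvS := Finset.mem_of_mem_erase hv
        have hvu := Finset.ne_of_mem_erase hv
        have hp := (hroot v hvS).resolve_left hvu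
        have : par v ∉ S.erase u ↔ par v = u := by
          simp [Finset.mem_erase, hp]
        rw [Set.mem_ofPred_eq, this]
        constructor
        · intro e
          rcases hadj u v e with h | h
          · exact absurd (h.2 ▸ hvS) hpu
          · exact h.2
        · intro e
          rw [← e]
          exact (hpar v (ner v hvS)).1.symm) one_pos
    rw [Finset.insert_erase huS] at hAB'
    have hR : ∀ v ∈ S, v ∈ ({u} : Set V) ↔ v ∈ {v | par v ∉ S} := by
      intro v hv
      rw [Set.mem_singleton_iff, Set.mem_ofPred_eq]
      constructor
      · rintro rfl; exact hpu
      · intro h; exact (hroot v hv).resolve_right h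
    exact ⟨A', B', hAB'.1.congr_roots hR, hAB'.2.congr_roots hR⟩
  · have hDss : D ⊂ S := Finset.ssubset_iff_subset_ne.2 ⟨hDS, hDeq⟩
    have hC1 : ∀ v, v ≠ r → par v ∈ S \ D → v ∈ S \ D := fun v hv h => by
      obtain ⟨h1, h2⟩ := Finset.mem_sdiff.1 h
      refine Finset.mem_sdiff.2 ⟨hS v hv h1, fun h3 => ?_⟩
      rcases hD2 v h3 with rfl | h4
      · exact hpu h1
      · exact h2 h4
    obtain ⟨A₁, B₁, h₁⟩ := ih D.card (hn ▸ Finset.card_lt_card hDss) D rfl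
      (fun h => hrS (hDS h)) hD1
    obtain ⟨A₂, B₂, h₂⟩ := ih (S \ D).card
      (hn ▸ Finset.card_lt_card (Finset.sdiff_ssubset hDS ⟨u, huD⟩)) (S \ D) rfl
      (fun h => hrS (Finset.mem_sdiff.1 h).1) hC1
    have := row_juxtapose (R := {v | par v ∉ S}) h₁ h₂ ⟨u, huD⟩
      (Finset.sdiff_nonempty.2 hDss.2) Finset.disjoint_sdiff
      (fun a ha b hb e => by
        obtain ⟨b1, b2⟩ := Finset.mem_sdiff.1 hb
        rcases hadj a b e with h | h
        · exact (Finset.mem_sdiff.1 (hC1 a h.1 (h.2 ▸ hb))).2 ha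
        · exact b2 (hD1 b h.1 (h.2 ▸ ha)))
      (fun a ha => by
        simp only [Set.mem_ofPred_eq]
        refine not_congr ⟨fun h => ?_, fun h => hDS h⟩
        by_contra h'
        exact (Finset.mem_sdiff.1 (hC1 a (ner a (hDS ha)) (Finset.mem_sdiff.2 ⟨h, h'⟩))).2 ha)
      (fun a ha => by
        obtain ⟨a1, a2⟩ := Finset.mem_sdiff.1 ha
        simp only [Set.mem_ofPred_eq]
        refine not_congr ⟨fun h => ?_, fun h => (Finset.mem_sdiff.1 h).1⟩
        exact Finset.mem_sdiff.2 ⟨h, fun h' => a2 (hD1 a (ner a a1) h')⟩)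
    rwa [Finset.union_sdiff_of_subset hDS] at this

/-! ### β-regions and the Euclidean plane -/

/-- The point of the Euclidean plane with the given coordinates. -/
def toPlane (p : ℝ × ℝ) : Plane := !₂[p.1, p.2]

@[simp] lemma toPlane_zero (p : ℝ × ℝ) : toPlane p 0 = p.1 := rfl

@[simp] lemma toPlane_one (p : ℝ × ℝ) : toPlane p 1 = p.2 := rfl

lemma toPlane_injective : Function.Injective toPlane := fun _ _ h =>
  Prod.ext (congrFun (congrArg WithLp.ofLp h) 0) (congrFun (congrArg WithLp.ofLp h) 1)

lemma inner_plane (x y : Plane) : ⟪x, y⟫ = x 0 * y 0 + x 1 * y 1 := by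
  simp [PiLp.inner_apply, Fin.sum_univ_two, mul_comm]

lemma inner_toPlane (a b c d : ℝ × ℝ) :
    ⟪toPlane a - toPlane b, toPlane c - toPlane d⟫ = ip (a - b) (c - d) := by
  simp [inner_plane, ip]

lemma dist_toPlane (a b : ℝ × ℝ) :
    dist (toPlane a) (toPlane b) = √(ip (a - b) (a - b)) := by
  rw [dist_eq_norm, ← inner_toPlane, norm_eq_sqrt_real_inner]

/-- The squared distance of `w` to the centre of one of the two disks of a β-region, compared
with the squared radius. -/
lemma sq_dist_center (p q w : Plane) (b : ℝ) :
    dist w ((1 - b / 2) • p + (b / 2) • q) ^ 2 =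
      ⟪w - p, w - p⟫ - b * ⟪w - p, q - p⟫ + (b * dist p q / 2) ^ 2 := by
  rw [div_pow, mul_pow, dist_eq_norm, dist_eq_norm, ← real_inner_self_eq_norm_sq,
    ← real_inner_self_eq_norm_sq]
  simp only [inner_plane, PiLp.sub_apply, PiLp.add_apply, PiLp.smul_apply, smul_eq_mul]
  ring

/-- A point of a closed disk of a closed β-region lies on the correct side of the line bounding
the strip. -/
lemma inner_nonneg_of_mem_closedBall {p q w : Plane} {b : ℝ} (hb : 1 ≤ b)
    (h : w ∈ Metric.closedBall ((1 - b / 2) • p + (b / 2) • q) (b * dist p q / 2)) :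
    0 ≤ ⟪w - p, q - p⟫ := by
  have h1 := pow_le_pow_left₀ dist_nonneg (Metric.mem_closedBall.1 h) 2
  rw [sq_dist_center] at h1
  have h2 : 0 ≤ ⟪w - p, w - p⟫ := real_inner_self_nonneg
  by_contra! h3
  nlinarith

lemma mem_ball_of_inner_neg {p q w : Plane} {b : ℝ} (hb : 1 ≤ b) (h : ⟪w - p, w - q⟫ < 0) :
    w ∈ Metric.ball ((1 - b / 2) • p + (b / 2) • q) (b * dist p q / 2) := by
  rw [Metric.mem_ball]
  refine lt_of_pow_lt_pow_left₀ 2 (by positivity) ?_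
  rw [sq_dist_center]
  have h1 : ⟪w - p, w - q⟫ = ⟪w - p, w - p⟫ - ⟪w - p, q - p⟫ := by
    rw [← inner_sub_right, sub_sub_sub_cancel_right]
  have h2 : 0 ≤ ⟪w - p, w - p⟫ := real_inner_self_nonneg
  nlinarith

/-- Every closed β-region is contained in the closed strip. -/
lemma Rclosed_subset_stripClosed (p q : Plane) {β : ℝ≥0∞} (hβ : 1 ≤ β) :
    Rclosed p q β ⊆ stripClosed p q := by
  unfold Rclosed
  split_ifs with h
  · exact subset_rfl
  · rintro w ⟨h1, h2⟩
    have hb : 1 ≤ β.toReal := by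
      simpa using ENNReal.toReal_mono h hβ
    refine ⟨inner_nonneg_of_mem_closedBall hb h1, inner_nonneg_of_mem_closedBall hb ?_⟩
    rwa [dist_comm, add_comm]

/-- The open disk with diameter `pq` is contained in every open β-region. -/
lemma mem_Ropen_of_inner_neg {p q w : Plane} {β : ℝ≥0∞} (hβ : 1 ≤ β)
    (hw : ⟪w - p, w - q⟫ < 0) : w ∈ Ropen p q β := by
  have hw' : ⟪w - q, w - p⟫ < 0 := by rwa [real_inner_comm]
  unfold Ropen
  split_ifs with h
  · have h1 : ⟪w - p, w - q⟫ = ⟪w - p, w - p⟫ - ⟪w - p, q - p⟫ := by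
      rw [← inner_sub_right, sub_sub_sub_cancel_right]
    have h2 : ⟪w - q, w - p⟫ = ⟪w - q, w - q⟫ - ⟪w - q, p - q⟫ := by
      rw [← inner_sub_right, sub_sub_sub_cancel_right]
    have h3 : 0 ≤ ⟪w - p, w - p⟫ := real_inner_self_nonneg
    have h4 : 0 ≤ ⟪w - q, w - q⟫ := real_inner_self_nonneg
    exact ⟨by linarith, by linarith⟩
  · have hb : 1 ≤ β.toReal := by
      simpa using ENNReal.toReal_mono h hβ
    refine ⟨mem_ball_of_inner_neg hb hw, ?_⟩
    have := mem_ball_of_inner_neg hb hw'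
    rwa [dist_comm, add_comm] at this

lemma InHull.mem_convexHull {a₀ b₀ a₁ b₁ p : ℝ × ℝ} (h : InHull a₀ b₀ a₁ b₁ p) :
    toPlane p ∈ convexHull ℝ {toPlane a₀, toPlane b₀, toPlane a₁, toPlane b₁} := by
  obtain ⟨c₀, c₁, c₂, c₃, h0, h1, h2, h3, hs, rfl⟩ := h
  have := (convex_convexHull ℝ {toPlane a₀, toPlane b₀, toPlane a₁, toPlane b₁}).sum_mem
    (t := Finset.univ) (w := ![c₀, c₁, c₂, c₃])
    (z := ![toPlane a₀, toPlane b₀, toPlane a₁, toPlane b₁])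
    (by simp [Fin.forall_fin_succ, h0, h1, h2, h3]) (by simp [Fin.sum_univ_four, hs])
    (by
      intro i _
      apply subset_convexHull
      fin_cases i <;> simp)
  convert this using 1
  ext i
  fin_cases i <;> simp [Fin.sum_univ_four]

lemma ip_self_nonneg (a : ℝ × ℝ) : 0 ≤ ip a a :=
  add_nonneg (mul_self_nonneg _) (mul_self_nonneg _)

/-! ### The drawing of a tree -/

lemma Half.injOn {V : Type*} {G : SimpleGraph V} {S : Finset V} {R : Set V}
    {A B : V → ℝ × ℝ} (h : Half G S R A B) {u v : V} (hu : u ∈ S) (hv : v ∈ S)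
    (e : A u = A v) : u = v := by
  by_contra hn
  by_cases ha : G.Adj u v
  · exact h.edge_x u hu v hv ha (congrArg Prod.fst e)
  · obtain ⟨w, -, hw⟩ := h.nonadj u hu v hv hn ha
    rw [e] at hw
    exact absurd hw (ip_self_nonneg _).not_gt

/-- The mutual-witness condition on one of the two drawings, for all β at once. -/
lemma Half.witness {V : Type*} {G : SimpleGraph V} {S : Finset V} {R : Set V}
    {A B : V → ℝ × ℝ} (h : Half G S R A B) {u v : V} (hu : u ∈ S) (hv : v ∈ S) (hn : u ≠ v)
    {β : ℝ≥0∞} (hβ : 1 ≤ β) :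
    (G.Adj u v → ∀ w ∈ S, toPlane (B w) ∉ Rclosed (toPlane (A u)) (toPlane (A v)) β) ∧
    (¬ G.Adj u v → ∃ w ∈ S, toPlane (B w) ∈ Ropen (toPlane (A u)) (toPlane (A v)) β) := by
  refine ⟨fun e w hw hm => ?_, fun e => ?_⟩
  · obtain ⟨h1, h2⟩ := Rclosed_subset_stripClosed _ _ hβ hm
    rw [inner_toPlane] at h1 h2
    rcases h.adj u hu v hv e w hw with h3 | h3 <;> linarith
  · obtain ⟨w, hw, h1⟩ := h.nonadj u hu v hv hn e
    exact ⟨w, hw, mem_Ropen_of_inner_neg hβ (by rwa [inner_toPlane])⟩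

/-- The point reflection exchanges the β-regions of reflected pairs, so the reflected half of a
row drawing is the mutual-witness condition on the second drawing. -/
lemma Half.witness_neg {V : Type*} {G : SimpleGraph V} {S : Finset V} {R : Set V}
    {A B : V → ℝ × ℝ} (h : Half G S R (-B) (-A)) {u v : V} (hu : u ∈ S) (hv : v ∈ S)
    (hn : u ≠ v) {β : ℝ≥0∞} (hβ : 1 ≤ β) :
    (G.Adj u v → ∀ w ∈ S, toPlane (A w) ∉ Rclosed (toPlane (B u)) (toPlane (B v)) β) ∧
    (¬ G.Adj u v → ∃ w ∈ S, toPlane (A w) ∈ Ropen (toPlane (B u)) (toPlane (B v)) β) := by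
  have neg : ∀ a b c d : ℝ × ℝ, ip (-a - -b) (-c - -d) = ip (a - b) (c - d) := by
    intro a b c d; simp [ip]; ring
  refine ⟨fun e w hw hm => ?_, fun e => ?_⟩
  · obtain ⟨h1, h2⟩ := Rclosed_subset_stripClosed _ _ hβ hm
    rw [inner_toPlane] at h1 h2
    rcases h.adj u hu v hv e w hw with h3 | h3 <;>
    · simp only [Pi.neg_apply, neg] at h3
      linarith
  · obtain ⟨w, hw, h1⟩ := h.nonadj u hu v hv hn e
    simp only [Pi.neg_apply, neg] at h1
    exact ⟨w, hw, mem_Ropen_of_inner_neg hβ (by rwa [inner_toPlane])⟩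

/-- A finite rooted tree has a row drawing of its whole vertex set, with a thin supporting
parallelogram. -/
lemma exists_para {V : Type*} [Fintype V] [DecidableEq V] {G : SimpleGraph V} (hG : G.IsTree)
    (r : V) {ε : ℝ} (hε : 0 < ε) :
    ∃ (R : Set V) (A B : V → ℝ × ℝ) (a₀ b₀ a₁ b₁ : ℝ × ℝ), (∀ v, v ≠ r → v ∈ R → G.Adj r v) ∧
      Row G Finset.univ {r} A B ∧ Para (Finset.univ.erase r) R r A B a₀ b₀ a₁ b₁ ε := by
  obtain ⟨par, dep, hpar, hadj⟩ := exists_parent hG r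
  obtain ⟨A, B, h⟩ := exists_row hpar hadj _ (Finset.univ.erase r) rfl (by simp)
    (fun v hv _ => by simpa using hv)
  have key : ∀ v, v ≠ r → (G.Adj r v ↔ v ∈ {u | par u ∉ Finset.univ.erase r}) := fun v hv => by
    have : v ∈ {u | par u ∉ Finset.univ.erase r} ↔ par v = r := by simp
    rw [this]
    constructor
    · intro e
      rcases hadj r v e with h | h
      · exact absurd rfl h.1
      · exact h.2
    · intro e
      have := (hpar v hv).1
      rw [e] at this
      exact this.symm
  obtain ⟨A', B', a₀, b₀, a₁, b₁, h1, h2⟩ := row_addRoot h (Finset.notMem_erase r _)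
    (fun v hv => key v (Finset.ne_of_mem_erase hv)) hε
  rw [Finset.insert_erase (Finset.mem_univ r)] at h1
  exact ⟨_, A', B', a₀, b₀, a₁, b₁, fun v hv hv' => (key v hv).2 hv', h1, h2⟩

/-- For any two isomorphic trees with corresponding roots and any ε > 0, there is a
pair of drawings that is an MW-β parallelogram drawing for every β ∈ [1,∞] whose
strip ratio  σ = |y(b₁) − y(b₀)| / |y(a₀) − y(a₁)|  satisfies σ < ε. -/
theorem isomorphic_trees_small_strip_ratio {V₀ V₁ : Type} [Fintype V₀] [Fintype V₁]
    (G₀ : SimpleGraph V₀) (G₁ : SimpleGraph V₁)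
    (h₀ : G₀.IsTree) (h₁ : G₁.IsTree) (φ : G₀ ≃g G₁)
    (r₀ : V₀) (r₁ : V₁) (hr : φ r₀ = r₁) (ε : ℝ) (hε : 0 < ε) :
    ∃ (Γ₀ : V₀ → Plane) (Γ₁ : V₁ → Plane) (a₀ b₀ a₁ b₁ : Plane),
      (∀ β : ℝ≥0∞, 1 ≤ β →
        IsMWParallelogramDrawing G₀ G₁ r₀ r₁ Γ₀ Γ₁ a₀ b₀ a₁ b₁ β) ∧
      |b₁ 1 - b₀ 1| / |a₀ 1 - a₁ 1| < ε := by
  classical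
  obtain ⟨R, A, B, a₀, b₀, a₁, b₁, hR, h, P⟩ := exists_para h₀ r₀ hε
  have hU : ∀ u : V₀, u ∈ Finset.univ := Finset.mem_univ
  have hsymm : φ.symm r₁ = r₀ := by rw [← hr]; exact φ.symm_apply_apply r₀
  have neV : Fintype.card V₁ = Fintype.card V₀ := (Fintype.card_congr φ.toEquiv).symm
  have hne : 1 < Fintype.card V₀ → (Finset.univ.erase r₀).Nonempty := fun hc => by
    rw [← Finset.card_pos, Finset.card_erase_of_mem (hU r₀), Finset.card_univ]
    omega
  have injB : ∀ u v, B u = B v → u = v := fun u v e =>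
    h.2.injOn (hU u) (hU v) (by simp [e])
  have adjφ : ∀ u v, G₀.Adj (φ.symm u) (φ.symm v) ↔ G₁.Adj u v := fun u v =>
    φ.symm.map_adj_iff
  refine ⟨fun u => toPlane (A u), fun w => toPlane (B (φ.symm w)), toPlane a₀, toPlane b₀,
    toPlane a₁, toPlane b₁, fun β hβ => ⟨⟨⟨?_, ?_, ?_⟩, ?_, ?_⟩, ?_, ?_, ?_, ?_, ?_, ?_, ?_, ?_⟩,
    ?_⟩
  · exact fun u v e => h.1.injOn (hU u) (hU v) (toPlane_injective e)
  · exact fun u v e => φ.symm.injective (injB _ _ (toPlane_injective e))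
  · rw [Set.disjoint_left]
    rintro _ ⟨u, rfl⟩ ⟨w, e⟩
    exact h.1.disj u (hU u) _ (hU (φ.symm w)) (toPlane_injective e).symm
  · intro u v n
    obtain ⟨k1, k2⟩ := h.1.witness (hU u) (hU v) n hβ
    refine ⟨fun e w => k1 e _ (hU _), fun e => ?_⟩
    obtain ⟨w, -, hw⟩ := k2 e
    exact ⟨φ w, by simpa using hw⟩
  · intro u v n
    obtain ⟨k1, k2⟩ := h.2.witness_neg (hU (φ.symm u)) (hU (φ.symm v))
      (φ.symm.injective.ne n) hβ
    rw [adjφ] at k1 k2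
    refine ⟨fun e w => k1 e _ (hU _), fun e => ?_⟩
    obtain ⟨w, -, hw⟩ := k2 e
    exact ⟨w, hw⟩
  · refine ⟨?_, ?_, ?_, P.y₁, P.y₂, P.y₃, P.x₁, P.x₂, P.x₃⟩
    · have := P.sum
      ext i
      fin_cases i
      · simpa using congrArg Prod.fst this
      · simpa using congrArg Prod.snd this
    · rw [dist_toPlane, dist_toPlane]
      exact Real.sqrt_lt_sqrt (ip_self_nonneg _) P.diag
    · rw [inner_toPlane]
      exact P.angle.ne'
  · rintro _ (⟨u, rfl⟩ | ⟨u, rfl⟩)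
    · exact (P.hullA u (by simp)).mem_convexHull
    · exact (P.hullB _ (by simp)).mem_convexHull
  · exact congrArg toPlane P.rootA
  · simp only [hsymm, P.rootB]
  · intro hc
    obtain ⟨f, hf, hfR, hfb⟩ := P.firstA (hne hc)
    refine ⟨f, hR f (Finset.ne_of_mem_erase hf) hfR, congrArg toPlane hfb, fun u hu hn => ?_⟩
    rcases P.midA u (Finset.mem_erase.2 ⟨hu, hU u⟩) with e | e
    · exact absurd (h.1.injOn (hU u) (hU f) (e.trans hfb.symm)) hn
    · exact e
  · intro hc
    obtain ⟨l, hl, hlR, hlb⟩ := P.firstB (hne (neV ▸ hc))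
    refine ⟨φ l, ?_, ?_, fun u hu hn => ?_⟩
    · rw [← hr]
      exact φ.map_adj_iff.2 (hR l (Finset.ne_of_mem_erase hl) hlR)
    · simp [hlb]
    · have hu' : φ.symm u ≠ r₀ := fun e => hu (by rw [← hr, ← e]; simp)
      rcases P.midB (φ.symm u) (Finset.mem_erase.2 ⟨hu', hU _⟩) with e | e
      · refine absurd ?_ hn
        rw [← injB _ _ (e.trans hlb.symm)]
        simp
      · exact e
  · exact fun u v e => h.1.edge_x u (hU u) v (hU v) e
  · intro u v e
    have := h.2.edge_x _ (hU (φ.symm u)) _ (hU (φ.symm v)) ((adjφ u v).2 e)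
    simpa using this
  · have h1 := P.ratio
    have h2 := P.y₁
    have h3 := P.y₂
    have h4 := P.y₃
    simp only [toPlane_one]
    rw [abs_of_pos (by linarith), abs_of_pos (by linarith), div_lt_iff₀ (by linarith)]
    exact h1

end
end

section
/- Any pair of isomorphic stars ⟨K_{1,n}, K_{1,n}⟩ with n ≥ 1 admits a linearly separable MW-[1] drawing (mutual witness Gabriel drawing). -/
/-!
The disk with diameter `pq` contains `w` exactly when `⟪w - p, w - q⟫ ≤ 0`, i.e. when `w` sees
`p` and `q` at an angle of at least 90 degrees. The leaves of the two stars are placed on the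
lines `y = -1` and `y = 1` so that their abscissae alternate: `4 i` for the first star and
`4 i + 2` for the second. Two leaves of the same star are then seen at an obtuse or right angle
from a leaf of the other star lying horizontally between them. The centers are placed on the
`y`-axis at `y = -H` and `y = H`, with `H = 8 n²`. This is so far away that every leaf of the
other star sees a center almost vertically, hence at an acute angle with each leaf of its own
star, and the same holds for the opposite center. The line `y = 0` separates the two drawings.
-/

open scoped RealInnerProductSpace ENNReal

noncomputable section

/-- The star `K_{1,n}`: center `none`, leaves `some j` for `j : Fin n`. -/
def starGraph (n : ℕ) : SimpleGraph (Option (Fin n)) :=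
  SimpleGraph.fromRel fun u _ => u = none

/-- Coordinate form of the Gabriel region, by the theorem of Thales. -/
lemma mem_Rclosed_one (p q w : Plane) :
    w ∈ Rclosed p q 1 ↔ (w 0 - p 0) * (w 0 - q 0) + (w 1 - p 1) * (w 1 - q 1) ≤ 0 := by
  -- For `β = 1` both disks are centered at the midpoint of `p` and `q`.
  have h1 : (1 - 1 / 2 : ℝ) = 1 / 2 := by norm_num
  simp only [Rclosed, ENNReal.one_ne_top, if_false, ENNReal.toReal_one, betaClosed, h1,
    Set.inter_self, Metric.mem_closedBall, one_mul]
  rw [← sq_le_sq₀ dist_nonneg (by positivity), div_pow, EuclideanSpace.dist_sq_eq,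
    EuclideanSpace.dist_sq_eq]
  simp only [Fin.sum_univ_two, Real.dist_eq, sq_abs, PiLp.add_apply, PiLp.smul_apply,
    smul_eq_mul]
  constructor <;> intro h <;> nlinarith

/-- The drawing of one star: the leaves lie on the line `y = s` with abscissae `4 i + d`, and the
center lies at height `8 n² s` on the `y`-axis. It is used with `s = -1, d = 0` and
`s = 1, d = 2`. -/
def starDrawing (n : ℕ) (s d : ℝ) : Option (Fin n) → Plane
  | none => !₂[0, s * (8 * (n : ℝ) ^ 2)]
  | some i => !₂[4 * ((i : ℕ) : ℝ) + d, s]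

lemma starDrawing_injective (n : ℕ) (hn : 1 ≤ n) (s d : ℝ) (hs : s ^ 2 = 1) :
    Function.Injective (starDrawing n s d) := by
  have hn' : (1 : ℝ) ≤ n := by exact_mod_cast hn
  have hne : s * (8 * (n : ℝ) ^ 2) ≠ s := by
    intro h
    have : s ^ 2 * (8 * (n : ℝ) ^ 2) = s ^ 2 := by linear_combination s * h
    rw [hs] at this
    nlinarith
  rintro (_ | i) (_ | j) h
  · rfl
  · have := congrArg (fun p : Plane => p 1) h
    simp only [starDrawing] at this
    exact absurd (by simpa using this) hne
  · have := congrArg (fun p : Plane => p 1) h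
    simp only [starDrawing] at this
    exact absurd (by simpa using this.symm) hne
  · have := congrArg (fun p : Plane => p 0) h
    simp only [starDrawing] at this
    have h2 : ((i : ℕ) : ℝ) = ((j : ℕ) : ℝ) := by simpa using this
    rw [Fin.ext (Nat.cast_injective h2)]

/-- No point of the opposite star witnesses against a center-leaf edge. -/
lemma center_leaf_free (n : ℕ) (s d d' : ℝ) (hs : s ^ 2 = 1)
    (hd2 : d ≤ 2) (hd' : 0 ≤ d') (hd2' : d' ≤ 2)
    (i : Fin n) (w : Option (Fin n)) :
    starDrawing n (-s) d' w ∉ Rclosed (starDrawing n s d none) (starDrawing n s d (some i)) 1 := by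
  rw [mem_Rclosed_one, not_le]
  have hi : ((i : ℕ) : ℝ) + 1 ≤ n := by exact_mod_cast i.2
  have hi0 : (0 : ℝ) ≤ ((i : ℕ) : ℝ) := Nat.cast_nonneg _
  rcases w with _ | k
  · simp [starDrawing]
    have : (-(s * (8 * (n : ℝ) ^ 2)) - s * (8 * (n : ℝ) ^ 2)) * (-(s * (8 * (n : ℝ) ^ 2)) - s)
        = s ^ 2 * (16 * (n : ℝ) ^ 2 * (8 * (n : ℝ) ^ 2 + 1)) := by ring
    rw [this, hs]
    have : (0 : ℝ) < n := by linarith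
    positivity
  · have hk : ((k : ℕ) : ℝ) + 1 ≤ n := by exact_mod_cast k.2
    have hk0 : (0 : ℝ) ≤ ((k : ℕ) : ℝ) := Nat.cast_nonneg _
    simp [starDrawing]
    have h1 : (-s - s * (8 * (n : ℝ) ^ 2)) * (-s - s) = s ^ 2 * (16 * (n : ℝ) ^ 2 + 2) := by ring
    rw [h1, hs]
    -- With `t` and `x` the abscissae of the witness and the leaf, `t ≥ 0` and both at most `4 n`, the
    -- horizontal term `t (t - x)` is at least `-16 n²`.
    have ht0 : 0 ≤ 4 * ((k : ℕ) : ℝ) + d' := by linarith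
    have ht : 4 * ((k : ℕ) : ℝ) + d' ≤ 4 * n := by linarith
    have hx : 4 * ((i : ℕ) : ℝ) + d ≤ 4 * n := by linarith
    generalize 4 * ((k : ℕ) : ℝ) + d' = t at *
    generalize 4 * ((i : ℕ) : ℝ) + d = x at *
    have a1 : t * x ≤ t * (4 * n) := mul_le_mul_of_nonneg_left hx ht0
    have a2 : t * (4 * n) ≤ 4 * n * (4 * n) := mul_le_mul_of_nonneg_right ht (by linarith)
    nlinarith [sq_nonneg t]

/-- Two leaves are witnessed by a leaf of the opposite star lying horizontally between them. -/
lemma leaf_leaf_blocked (n : ℕ) (s d d' : ℝ) (hs : s ^ 2 = 1)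
    (hd : d' = d + 2 ∨ d = d' + 2) (i j : Fin n) (hij : i < j) :
    ∃ w, starDrawing n (-s) d' w ∈
      Rclosed (starDrawing n s d (some i)) (starDrawing n s d (some j)) 1 := by
  have h : ((i : ℕ) : ℝ) + 1 ≤ ((j : ℕ) : ℝ) := by exact_mod_cast hij
  have h1 : (-s - s) * (-s - s) = 4 := by linear_combination 4 * hs
  rcases hd with rfl | rfl
  · refine ⟨some i, ?_⟩
    rw [mem_Rclosed_one]
    simp [starDrawing]
    rw [h1]
    nlinarith
  · refine ⟨some j, ?_⟩
    rw [mem_Rclosed_one]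
    simp [starDrawing]
    rw [h1]
    nlinarith

lemma Rclosed_one_comm (p q : Plane) : Rclosed p q 1 = Rclosed q p 1 := by
  ext w
  rw [mem_Rclosed_one, mem_Rclosed_one, mul_comm (w 0 - p 0), mul_comm (w 1 - p 1)]

lemma starDrawing_adj_iff (n : ℕ) (s d d' : ℝ) (hs : s ^ 2 = 1)
    (hd : d = 0 ∧ d' = 2 ∨ d = 2 ∧ d' = 0) (u v : Option (Fin n)) (huv : u ≠ v) :
    (starGraph n).Adj u v ↔
      ∀ w, starDrawing n (-s) d' w ∉ Rclosed (starDrawing n s d u) (starDrawing n s d v) 1 := by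
  have hfree := center_leaf_free n s d d' hs
    (by rcases hd with h | h <;> linarith) (by rcases hd with h | h <;> linarith)
    (by rcases hd with h | h <;> linarith)
  have hblock := leaf_leaf_blocked n s d d' hs
    (by rcases hd with h | h; exacts [Or.inl (by linarith), Or.inr (by linarith)])
  rcases u with _ | i <;> rcases v with _ | j
  · exact absurd rfl huv
  · exact iff_of_true (by simp [starGraph]) (hfree j)
  · rw [Rclosed_one_comm]
    exact iff_of_true (by simp [starGraph]) (hfree i)
  · refine iff_of_false (by simp [starGraph]) ?_
    push Not
    have hne : i ≠ j := fun h => huv (by rw [h])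
    rcases lt_or_gt_of_ne hne with h | h
    · exact hblock i j h
    · rw [Rclosed_one_comm]
      exact hblock j i h

/-- The drawing lies on the side of the `x`-axis given by the sign of `s`. -/
lemma starDrawing_side (n : ℕ) (hn : 1 ≤ n) (s d : ℝ) (hs : s ^ 2 = 1) (u : Option (Fin n)) :
    0 < s * starDrawing n s d u 1 := by
  have hn' : (0 : ℝ) < n := by exact_mod_cast hn
  rcases u with _ | i
  · simp [starDrawing]
    rw [← mul_assoc, ← sq, hs]
    positivity
  · have : s * s = 1 := by rw [← sq, hs]
    simp only [starDrawing]
    exact lt_of_lt_of_eq one_pos this.symm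

/-- Any pair of isomorphic stars `⟨K_{1,n}, K_{1,n}⟩` with n ≥ 1 admits a linearly
separable mutual witness Gabriel drawing (MW-[1] drawing). -/
theorem isomorphic_stars_linearly_separable (n : ℕ) (hn : 1 ≤ n) :
    ∃ (Γ₀ Γ₁ : Option (Fin n) → Plane),
      IsMWClosedDrawing (starGraph n) (starGraph n) Γ₀ Γ₁ 1 ∧
      LinearlySeparable Γ₀ Γ₁ := by
  have h0 := starDrawing_side n hn (-1) 0 (by norm_num)
  have h1 := starDrawing_side n hn 1 2 (by norm_num)
  refine ⟨starDrawing n (-1) 0, starDrawing n 1 2, ⟨⟨starDrawing_injective n hn _ _ (by norm_num),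
    starDrawing_injective n hn _ _ (by norm_num), ?_⟩, ?_, ?_⟩, !₂[0, 1], 0, ?_, ?_, ?_⟩
  · rw [Set.disjoint_left]
    rintro _ ⟨u, rfl⟩ ⟨v, hv⟩
    have hu := h0 u
    have hv' := h1 v
    rw [hv] at hv'
    linarith
  · intro u v huv
    simpa using starDrawing_adj_iff n (-1) 0 2 (by norm_num) (by simp) u v huv
  · intro u v huv
    exact starDrawing_adj_iff n 1 2 0 (by norm_num) (by simp) u v huv
  · intro h
    have := congrArg (fun p : Plane => p 1) h
    simp at this
  · intro v
    have := h0 v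
    simp [PiLp.inner_apply, Fin.sum_univ_two]
    linarith
  · intro v
    have := h1 v
    simp [PiLp.inner_apply, Fin.sum_univ_two]
    linarith

end
end
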